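/- arXiv:1507.02176 — 2 statements merged into one kernel-verified Lean document; each statement's English description precedes it below -/
import Mathlib

section
/- Under assumptions (H1)–(H5), the weak semilimits of the value functions do not depend on the fast variable for positive times: for every x0 ∈ ℝ^N, every y0, z0 ∈ ℝ^M and every t0 > 0 one has (liminf_# V^ε)(x0,y0,t0) = (liminf_# V^ε)(x0,z0,t0) and (limsup^# V^ε)(x0,y0,t0) = (limsup^# V^ε)(x0,z0,t0). -/
open Set MeasureTheory Metric Filter
open scoped RealInnerProductSpace Topology

noncomputable section

/-- `ℝ^n` with the Euclidean structure. -/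
abbrev Euc (n : ℕ) : Type := EuclideanSpace ℝ (Fin n)

/-- A control: a measurable map with values in the control set `A`. -/
def IsControl {k : ℕ} (A : Set (Euc k)) (α : ℝ → Euc k) : Prop :=
  Measurable α ∧ ∀ t, α t ∈ A

/-- `(ξ, η)` is a trajectory of the controlled dynamics `(CD_ε)` for the control `α`:
this is the integral form, equivalent to `(ξ, η)` being locally absolutely continuous
with `ξ' = ε f(ξ, η, α)` and `η' = g(ξ, η, α)` a.e. on `[0, ∞)`. -/
def IsTrajectory {N M k : ℕ}
    (f : Euc N → Euc M → Euc k → Euc N) (g : Euc N → Euc M → Euc k → Euc M)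
    (ε : ℝ) (α : ℝ → Euc k) (ξ : ℝ → Euc N) (η : ℝ → Euc M) : Prop :=
  (∀ t, 0 ≤ t → IntervalIntegrable (fun s => f (ξ s) (η s) (α s)) volume 0 t) ∧
  (∀ t, 0 ≤ t → IntervalIntegrable (fun s => g (ξ s) (η s) (α s)) volume 0 t) ∧
  (∀ t, 0 ≤ t → ξ t = ξ 0 + ε • ∫ s in (0:ℝ)..t, f (ξ s) (η s) (α s)) ∧
  (∀ t, 0 ≤ t → η t = η 0 + ∫ s in (0:ℝ)..t, g (ξ s) (η s) (α s))

/-- The value function `V^ε(x, y, t)` of the singularly perturbed optimal control problem. -/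
def valueFun {N M k : ℕ} (A : Set (Euc k))
    (f : Euc N → Euc M → Euc k → Euc N) (g : Euc N → Euc M → Euc k → Euc M)
    (ℓ : Euc N → Euc M → Euc k → ℝ) (u0 : Euc N → Euc M → ℝ)
    (ε : ℝ) (x : Euc N) (y : Euc M) (t : ℝ) : ℝ :=
  sInf { v : ℝ | ∃ (α : ℝ → Euc k) (ξ : ℝ → Euc N) (η : ℝ → Euc M),
    IsControl A α ∧ IsTrajectory f g ε α ξ η ∧ ξ 0 = x ∧ η 0 = y ∧
    IntervalIntegrable (fun s => ℓ (ξ s) (η s) (α s)) volume 0 (t / ε) ∧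
    v = ε * (∫ s in (0:ℝ)..(t / ε), ℓ (ξ s) (η s) (α s)) + u0 (ξ (t / ε)) (η (t / ε)) }

/-- The Hamiltonian `H(x,y,p,q) = max_{a ∈ A} { -p·f(x,y,a) - q·g(x,y,a) - ℓ(x,y,a) }`. -/
def Ham {N M k : ℕ} (A : Set (Euc k))
    (f : Euc N → Euc M → Euc k → Euc N) (g : Euc N → Euc M → Euc k → Euc M)
    (ℓ : Euc N → Euc M → Euc k → ℝ)
    (x : Euc N) (y : Euc M) (p : Euc N) (q : Euc M) : ℝ :=
  sSup ((fun a => -⟪p, f x y a⟫ - ⟪q, g x y a⟫ - ℓ x y a) '' A)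

/-- Viscosity subsolution of the stationary equation `G(y, Du) = b` on `Ω`. -/
def IsVSubOn {m : ℕ} (G : Euc m → Euc m → ℝ) (b : ℝ) (Ω : Set (Euc m)) (u : Euc m → ℝ) : Prop :=
  UpperSemicontinuousOn u Ω ∧
  ∀ ψ : Euc m → ℝ, ContDiff ℝ 1 ψ → ∀ y ∈ Ω,
    IsLocalMaxOn (fun z => u z - ψ z) Ω y → G y (gradient ψ y) ≤ b

/-- Viscosity supersolution of the stationary equation `G(y, Du) = b` on `Ω`. -/
def IsVSupOn {m : ℕ} (G : Euc m → Euc m → ℝ) (b : ℝ) (Ω : Set (Euc m)) (u : Euc m → ℝ) : Prop :=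
  LowerSemicontinuousOn u Ω ∧
  ∀ ψ : Euc m → ℝ, ContDiff ℝ 1 ψ → ∀ y ∈ Ω,
    IsLocalMinOn (fun z => u z - ψ z) Ω y → b ≤ G y (gradient ψ y)

/-- The set of levels `b` for which `F(y, Du) = b` has a viscosity subsolution on `ℝ^m`. -/
def subsolLevels {m : ℕ} (F : Euc m → Euc m → ℝ) : Set ℝ :=
  { b : ℝ | ∃ u : Euc m → ℝ, IsVSubOn F b univ u }

/-- The critical value of a Hamiltonian `F` on `ℝ^m`. -/
def critVal {m : ℕ} (F : Euc m → Euc m → ℝ) : ℝ :=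
  sInf (subsolLevels F)

/-- The effective Hamiltonian `H̄(x, p)`. -/
def effH {N M k : ℕ} (A : Set (Euc k))
    (f : Euc N → Euc M → Euc k → Euc N) (g : Euc N → Euc M → Euc k → Euc M)
    (ℓ : Euc N → Euc M → Euc k → ℝ) (x : Euc N) (p : Euc N) : ℝ :=
  critVal (fun (y q : Euc M) => Ham A f g ℓ x y p q)

/-- The frozen Hamiltonian `H₀(y, q) = H(x₀, y, p₀, q)` of the cell problem. -/
def cellH {N M k : ℕ} (A : Set (Euc k))
    (f : Euc N → Euc M → Euc k → Euc N) (g : Euc N → Euc M → Euc k → Euc M)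
    (ℓ : Euc N → Euc M → Euc k → ℝ) (x0 p0 : Euc N) : Euc M → Euc M → ℝ :=
  fun y q => Ham A f g ℓ x0 y p0 q

/-- Viscosity subsolution of `u_t + G(x, D_x u) = 0` on `Ω ⊆ ℝ^n × ℝ`. -/
def IsParabSubOn {n : ℕ} (G : Euc n → Euc n → ℝ) (Ω : Set (Euc n × ℝ)) (u : Euc n × ℝ → ℝ) : Prop :=
  UpperSemicontinuousOn u Ω ∧
  ∀ ψ : Euc n × ℝ → ℝ, ContDiff ℝ 1 ψ → ∀ z ∈ Ω,
    IsLocalMaxOn (fun w => u w - ψ w) Ω z →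
    deriv (fun s => ψ (z.1, s)) z.2 + G z.1 (gradient (fun x => ψ (x, z.2)) z.1) ≤ 0

/-- Viscosity supersolution of `u_t + G(x, D_x u) = 0` on `Ω ⊆ ℝ^n × ℝ`. -/
def IsParabSupOn {n : ℕ} (G : Euc n → Euc n → ℝ) (Ω : Set (Euc n × ℝ)) (u : Euc n × ℝ → ℝ) : Prop :=
  LowerSemicontinuousOn u Ω ∧
  ∀ ψ : Euc n × ℝ → ℝ, ContDiff ℝ 1 ψ → ∀ z ∈ Ω,
    IsLocalMinOn (fun w => u w - ψ w) Ω z →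
    0 ≤ deriv (fun s => ψ (z.1, s)) z.2 + G z.1 (gradient (fun x => ψ (x, z.2)) z.1)

/-- Viscosity subsolution of `u_t + H(x, y, D_x u, D_y u / ε) = 0` on `Ω ⊆ (ℝ^N × ℝ^M) × ℝ`. -/
def IsHJSubOn {N M : ℕ} (Hm : Euc N → Euc M → Euc N → Euc M → ℝ) (ε : ℝ)
    (Ω : Set ((Euc N × Euc M) × ℝ)) (u : (Euc N × Euc M) × ℝ → ℝ) : Prop :=
  UpperSemicontinuousOn u Ω ∧
  ∀ ψ : (Euc N × Euc M) × ℝ → ℝ, ContDiff ℝ 1 ψ → ∀ z ∈ Ω,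
    IsLocalMaxOn (fun w => u w - ψ w) Ω z →
    deriv (fun s => ψ (z.1, s)) z.2 +
      Hm z.1.1 z.1.2 (gradient (fun x => ψ ((x, z.1.2), z.2)) z.1.1)
        (ε⁻¹ • gradient (fun y => ψ ((z.1.1, y), z.2)) z.1.2) ≤ 0

/-- Viscosity supersolution of `u_t + H(x, y, D_x u, D_y u / ε) = 0` on `Ω`. -/
def IsHJSupOn {N M : ℕ} (Hm : Euc N → Euc M → Euc N → Euc M → ℝ) (ε : ℝ)
    (Ω : Set ((Euc N × Euc M) × ℝ)) (u : (Euc N × Euc M) × ℝ → ℝ) : Prop :=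
  LowerSemicontinuousOn u Ω ∧
  ∀ ψ : (Euc N × Euc M) × ℝ → ℝ, ContDiff ℝ 1 ψ → ∀ z ∈ Ω,
    IsLocalMinOn (fun w => u w - ψ w) Ω z →
    0 ≤ deriv (fun s => ψ (z.1, s)) z.2 +
      Hm z.1.1 z.1.2 (gradient (fun x => ψ ((x, z.1.2), z.2)) z.1.1)
        (ε⁻¹ • gradient (fun y => ψ ((z.1.1, y), z.2)) z.1.2)

/-- The upper weak semilimit `(limsup^# V^ε)(z)`. -/
def upperLim {Z : Type*} [TopologicalSpace Z] (V : ℝ → Z → ℝ) (z : Z) : ℝ :=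
  sSup { l : ℝ | ∃ (e : ℕ → ℝ) (w : ℕ → Z), (∀ n, 0 < e n) ∧
    Tendsto e atTop (𝓝 0) ∧ Tendsto w atTop (𝓝 z) ∧
    l = Filter.limsup (fun n => V (e n) (w n)) atTop }

/-- The lower weak semilimit `(liminf_# V^ε)(z)`. -/
def lowerLim {Z : Type*} [TopologicalSpace Z] (V : ℝ → Z → ℝ) (z : Z) : ℝ :=
  sInf { l : ℝ | ∃ (e : ℕ → ℝ) (w : ℕ → Z), (∀ n, 0 < e n) ∧
    Tendsto e atTop (𝓝 0) ∧ Tendsto w atTop (𝓝 z) ∧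
    l = Filter.liminf (fun n => V (e n) (w n)) atTop }

/-- The lower semicontinuous envelope `φ_#`. -/
def lscEnvelope {X : Type*} [TopologicalSpace X] (φ : X → ℝ) (x : X) : ℝ :=
  Filter.liminf φ (𝓝 x)

/-- Local equiboundedness of the family of value functions. -/
def LocEquibounded {N M : ℕ} (V : ℝ → Euc N → Euc M → ℝ → ℝ) : Prop :=
  ∀ C : Set (Euc N × Euc M × ℝ), Bornology.IsBounded C →
    ∃ Mb : ℝ, ∀ ε : ℝ, 0 < ε → ∀ z ∈ C, 0 ≤ z.2.2 → |V ε z.1 z.2.1 z.2.2| ≤ Mb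

/-- The sublevel set `Z_b(y)` of a Hamiltonian. -/
def sublevel {m : ℕ} (G : Euc m → Euc m → ℝ) (b : ℝ) (y : Euc m) : Set (Euc m) :=
  { q | G y q ≤ b }

/-- The support function `σ_b(y, v)` of the sublevel `Z_b(y)`. -/
def suppFn {m : ℕ} (G : Euc m → Euc m → ℝ) (b : ℝ) (y v : Euc m) : ℝ :=
  sSup ((fun q => ⟪q, v⟫) '' sublevel G b y)

/-- The intrinsic length of a curve (Lipschitz curves are differentiable a.e.). -/
def intrinsicLen {m : ℕ} (G : Euc m → Euc m → ℝ) (b : ℝ) (ξ : ℝ → Euc m) : ℝ :=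
  ∫ s in (0:ℝ)..1, suppFn G b (ξ s) (deriv ξ s)

/-- Admissible (Lipschitz) curves on `[0,1]` joining `y₁` to `y₂`. -/
def IsAdmCurve {m : ℕ} (ξ : ℝ → Euc m) (y₁ y₂ : Euc m) : Prop :=
  (∃ Kl : NNReal, LipschitzWith Kl ξ) ∧ ξ 0 = y₁ ∧ ξ 1 = y₂

/-- The intrinsic distance `S_b(y₁, y₂)`. -/
def intrinsicDist {m : ℕ} (G : Euc m → Euc m → ℝ) (b : ℝ) (y₁ y₂ : Euc m) : ℝ :=
  sInf { L : ℝ | ∃ ξ : ℝ → Euc m, IsAdmCurve ξ y₁ y₂ ∧ L = intrinsicLen G b ξ }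

/-- The weighted intrinsic length associated with a weight `h`. -/
def wIntrinsicLen {m : ℕ} (G : Euc m → Euc m → ℝ) (b : ℝ) (h : Euc m → ℝ) (ξ : ℝ → Euc m) : ℝ :=
  ∫ s in (0:ℝ)..1, h (ξ s) * suppFn G b (ξ s) (deriv ξ s)

/-- The weighted intrinsic distance `S_b^h(y₁, y₂)`. -/
def wIntrinsicDist {m : ℕ} (G : Euc m → Euc m → ℝ) (b : ℝ) (h : Euc m → ℝ) (y₁ y₂ : Euc m) : ℝ :=
  sInf { L : ℝ | ∃ ξ : ℝ → Euc m, IsAdmCurve ξ y₁ y₂ ∧ L = wIntrinsicLen G b h ξ }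

/-- The intrinsic critical distance `S(y₁, y₂)` of the cell problem at `(x₀, p₀)`. -/
def cellS {N M k : ℕ} (A : Set (Euc k))
    (f : Euc N → Euc M → Euc k → Euc N) (g : Euc N → Euc M → Euc k → Euc M)
    (ℓ : Euc N → Euc M → Euc k → ℝ) (x0 p0 : Euc N) (y₁ y₂ : Euc M) : ℝ :=
  intrinsicDist (cellH A f g ℓ x0 p0) (effH A f g ℓ x0 p0) y₁ y₂

/-- The Aubry set of `G` at the level `c`: points near which no global viscosity
subsolution of `G(y, Du) = c` is strict. -/
def AubrySet {m : ℕ} (G : Euc m → Euc m → ℝ) (c : ℝ) : Set (Euc m) :=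
  { y₀ | ¬ ∃ (u : Euc m → ℝ) (δ : ℝ) (U : Set (Euc m)),
      IsVSubOn G c univ u ∧ 0 < δ ∧ IsOpen U ∧ y₀ ∈ U ∧ IsVSubOn G (c - δ) U u }

end


set_option linter.unusedSectionVars false

noncomputable section

/-- Concatenation of two functions at time `T`. -/
def catAt {X : Type*} (T : ℝ) (u v : ℝ → X) (t : ℝ) : X := if t < T then u t else v (t - T)

lemma catAt_lt {X : Type*} {T : ℝ} {u v : ℝ → X} {t : ℝ} (h : t < T) : catAt T u v t = u t := by
  simp [catAt, h]

lemma catAt_ge {X : Type*} {T : ℝ} {u v : ℝ → X} {t : ℝ} (h : T ≤ t) :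
    catAt T u v t = v (t - T) := by
  simp [catAt, not_lt.2 h]

lemma catAt_le {X : Type*} {T : ℝ} {u v : ℝ → X} (huv : v 0 = u T) {t : ℝ} (h : t ≤ T) :
    catAt T u v t = u t := by
  rcases h.lt_or_eq with h | h
  · exact catAt_lt h
  · subst h; rw [catAt_ge le_rfl]; simpa using huv

section catint
variable {E : Type*} [NormedAddCommGroup E] [NormedSpace ℝ E]

lemma catAt_ae {T t : ℝ} (ht0 : 0 ≤ t) (htT : t ≤ T) (u v : ℝ → E) :
    ∀ᵐ x ∂(volume.restrict (uIoc 0 t)), u x = catAt T u v x := by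
  rw [uIoc_of_le ht0]
  have h1 : ∀ᵐ x ∂(volume.restrict (Ioc 0 t)), x ≠ T := by
    apply ae_restrict_of_ae
    simp [ae_iff]
  filter_upwards [h1, ae_restrict_mem measurableSet_Ioc] with x hx hx2
  rw [catAt_lt (lt_of_le_of_ne (hx2.2.trans htT) hx)]

lemma catAt_integral_left {T t : ℝ} (ht0 : 0 ≤ t) (htT : t ≤ T) (u v : ℝ → E) :
    ∫ s in (0:ℝ)..t, catAt T u v s = ∫ s in (0:ℝ)..t, u s := by
  refine intervalIntegral.integral_congr_ae_restrict ?_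
  filter_upwards [catAt_ae ht0 htT u v] with x hx using hx.symm

lemma catAt_integrable_left {T t : ℝ} (ht0 : 0 ≤ t) (htT : t ≤ T) {u v : ℝ → E}
    (hu : IntervalIntegrable u volume 0 t) : IntervalIntegrable (catAt T u v) volume 0 t :=
  hu.congr_ae (catAt_ae ht0 htT u v)

lemma catAt_integrable_right {T t : ℝ} (ht0 : 0 ≤ t) {u v : ℝ → E}
    (hv : IntervalIntegrable v volume 0 t) :
    IntervalIntegrable (catAt T u v) volume T (T + t) := by
  have h := hv.comp_sub_right T
  rw [zero_add, add_comm] at h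
  refine h.congr_ae ?_
  rw [uIoc_of_le (by linarith)]
  filter_upwards [ae_restrict_mem measurableSet_Ioc] with x hx
  rw [catAt_ge hx.1.le]

lemma catAt_integral_right {T t : ℝ} (ht0 : 0 ≤ t) (u v : ℝ → E) :
    ∫ s in T..(T + t), catAt T u v s = ∫ s in (0:ℝ)..t, v s := by
  have : ∫ s in T..(T + t), catAt T u v s = ∫ s in T..(T + t), v (s - T) := by
    refine intervalIntegral.integral_congr ?_
    intro x hx
    rw [uIcc_of_le (by linarith)] at hx
    exact catAt_ge hx.1
  rw [this, intervalIntegral.integral_comp_sub_right]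
  simp

lemma catAt_integrable {T t : ℝ} (hT : 0 ≤ T) (ht0 : 0 ≤ t) {u v : ℝ → E}
    (hu : IntervalIntegrable u volume 0 T)
    (hv : IntervalIntegrable v volume 0 t) :
    IntervalIntegrable (catAt T u v) volume 0 (T + t) :=
  (catAt_integrable_left hT le_rfl hu).trans (catAt_integrable_right ht0 hv)

lemma catAt_integral {T t : ℝ} (hT : 0 ≤ T) (ht0 : 0 ≤ t) {u v : ℝ → E}
    (hu : IntervalIntegrable u volume 0 T)
    (hv : IntervalIntegrable v volume 0 t) :
    ∫ s in (0:ℝ)..(T + t), catAt T u v s = (∫ s in (0:ℝ)..T, u s) + ∫ s in (0:ℝ)..t, v s := by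
  rw [← intervalIntegral.integral_add_adjacent_intervals
    (catAt_integrable_left hT le_rfl hu) (catAt_integrable_right ht0 hv),
    catAt_integral_left hT le_rfl, catAt_integral_right ht0]

end catint

/-- Trajectory on `[0,T]` of a generic control system. -/
structure TrajOn {E U : Type*} [NormedAddCommGroup E] [NormedSpace ℝ E] [MeasurableSpace U]
    (F : E → U → E) (A : Set U) (T : ℝ) (α : ℝ → U) (p : ℝ → E) : Prop where
  meas : Measurable α
  mem : ∀ t, α t ∈ A
  int : IntervalIntegrable (fun s => F (p s) (α s)) volume 0 T
  eqn : ∀ t ∈ Icc 0 T, p t = p 0 + ∫ s in (0:ℝ)..t, F (p s) (α s)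

section traj
variable {E U : Type*} [NormedAddCommGroup E] [NormedSpace ℝ E] [MeasurableSpace U]
  {F : E → U → E} {A : Set U}

lemma TrajOn.continuousOn {T : ℝ} (hT : 0 ≤ T) {α : ℝ → U} {p : ℝ → E}
    (h : TrajOn F A T α p) : ContinuousOn p (Icc 0 T) := by
  have h1 := intervalIntegral.continuousOn_primitive_interval' h.int (left_mem_uIcc)
  rw [uIcc_of_le hT] at h1
  exact (continuousOn_const.add h1).congr (fun t ht => h.eqn t ht)

lemma TrajOn.mono {T T' : ℝ} (hT' : 0 ≤ T') (hTT : T' ≤ T) {α : ℝ → U} {p : ℝ → E}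
    (h : TrajOn F A T α p) : TrajOn F A T' α p where
  meas := h.meas
  mem := h.mem
  int := h.int.mono_set (by
    rw [uIcc_of_le hT', uIcc_of_le (hT'.trans hTT)]; exact Icc_subset_Icc le_rfl hTT)
  eqn := fun t ht => h.eqn t ⟨ht.1, ht.2.trans hTT⟩

lemma TrajOn.mono_set {B : Set U} (hAB : A ⊆ B) {T : ℝ} {α : ℝ → U} {p : ℝ → E}
    (h : TrajOn F A T α p) : TrajOn F B T α p :=
  ⟨h.meas, fun t => hAB (h.mem t), h.int, h.eqn⟩

lemma TrajOn.congr {T : ℝ} (hT : 0 ≤ T) {α : ℝ → U} {p q : ℝ → E}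
    (h : TrajOn F A T α p) (hpq : ∀ t ∈ Icc 0 T, p t = q t) : TrajOn F A T α q where
  meas := h.meas
  mem := h.mem
  int := by
    refine h.int.congr_ae ?_
    rw [uIoc_of_le hT]
    filter_upwards [ae_restrict_mem measurableSet_Ioc] with x hx
    rw [hpq x ⟨hx.1.le, hx.2⟩]
  eqn := fun t ht => by
    rw [← hpq t ht, ← hpq 0 ⟨le_rfl, hT⟩, h.eqn t ht]
    congr 1
    refine intervalIntegral.integral_congr ?_
    intro x hx
    rw [uIcc_of_le ht.1] at hx
    simp only
    rw [hpq x ⟨hx.1, hx.2.trans ht.2⟩]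

lemma catAt_comp (T : ℝ) (α₁ α₂ : ℝ → U) (p₁ p₂ : ℝ → E) :
    (fun s => F (catAt T p₁ p₂ s) (catAt T α₁ α₂ s)) =
      catAt T (fun s => F (p₁ s) (α₁ s)) (fun s => F (p₂ s) (α₂ s)) := by
  funext s
  unfold catAt
  split_ifs <;> rfl

lemma catAt_measurable {T : ℝ} {α₁ α₂ : ℝ → U} (h1 : Measurable α₁) (h2 : Measurable α₂) :
    Measurable (catAt T α₁ α₂) :=
  Measurable.ite measurableSet_Iio h1 (h2.comp (measurable_id.sub_const T))

lemma TrajOn.concat {T₁ T₂ : ℝ} (hT₁ : 0 ≤ T₁) (hT₂ : 0 ≤ T₂) {α₁ α₂ : ℝ → U} {p₁ p₂ : ℝ → E}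
    (h1 : TrajOn F A T₁ α₁ p₁) (h2 : TrajOn F A T₂ α₂ p₂) (hj : p₂ 0 = p₁ T₁) :
    TrajOn F A (T₁ + T₂) (catAt T₁ α₁ α₂) (catAt T₁ p₁ p₂) where
  meas := catAt_measurable h1.meas h2.meas
  mem := fun t => by unfold catAt; split_ifs; exacts [h1.mem _, h2.mem _]
  int := by
    rw [catAt_comp]
    exact catAt_integrable hT₁ hT₂ h1.int h2.int
  eqn := fun t ht => by
    rw [catAt_comp, catAt_le hj hT₁]
    rcases le_total t T₁ with h | h
    · rw [catAt_le hj h, catAt_integral_left ht.1 h, h1.eqn t ⟨ht.1, h⟩]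
    · obtain ⟨r, rfl⟩ : ∃ r, t = T₁ + r := ⟨t - T₁, by ring⟩
      have hr : r ∈ Icc 0 T₂ := ⟨by linarith, by linarith [ht.2]⟩
      rw [catAt_integral hT₁ hr.1 h1.int (h2.mono hr.1 hr.2).int, catAt_ge h, add_sub_cancel_left,
        h2.eqn r hr, hj, h1.eqn T₁ ⟨hT₁, le_rfl⟩, add_assoc]

lemma TrajOn.reverse {T : ℝ} (hT : 0 ≤ T) {α : ℝ → U} {p : ℝ → E}
    (h : TrajOn F A T α p) :
    TrajOn (fun q a => - F q a) A T (fun t => α (T - t)) (fun t => p (T - t)) where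
  meas := h.meas.comp (measurable_const.sub measurable_id)
  mem := fun t => h.mem _
  int := by
    have := (h.int.comp_sub_left T).neg.symm
    rw [sub_zero, sub_self] at this
    exact this
  eqn := fun t ht => by
    have e1 := intervalIntegral.integral_comp_sub_left (a := 0) (b := t)
      (fun s => F (p s) (α s)) T
    rw [intervalIntegral.integral_neg, e1, sub_zero, h.eqn (T - t) ⟨by linarith [ht.2], by linarith [ht.1]⟩,
      h.eqn T ⟨hT, le_rfl⟩, ← intervalIntegral.integral_add_adjacent_intervals
        (h.mono (T' := T - t) (by linarith [ht.2]) (by linarith [ht.1])).int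
        ((h.mono (T' := T - t) (by linarith [ht.2]) (by linarith [ht.1])).int.symm.trans h.int)]
    abel

lemma exists_short [CompleteSpace E] {L : ℝ} (hL : 0 ≤ L) {a : U} (ha : a ∈ A)
    (hLip : ∀ p q, ‖F p a - F q a‖ ≤ L * ‖p - q‖) (x : E) :
    ∃ p : ℝ → E, p 0 = x ∧ TrajOn F A (1 / (L + 1)) (fun _ => a) p := by
  have hτ : 0 ≤ 1 / (L + 1) := by positivity
  have hLW : LipschitzWith (Real.toNNReal L) (fun p => F p a) := by
    apply LipschitzWith.of_dist_le_mul
    intro p q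
    rw [dist_eq_norm, dist_eq_norm, Real.coe_toNNReal _ hL]
    exact hLip p q
  set R : ℝ := ‖F x a‖ + 1 with hR
  have hRp : 0 ≤ R := by positivity
  have hPL : IsPicardLindelof (fun _ q => F q a) (tmin := 0) (tmax := 1 / (L + 1))
      ⟨0, le_rfl, hτ⟩ x (Real.toNNReal R) 0 (Real.toNNReal ((L + 1) * R)) (Real.toNNReal L) := by
    apply IsPicardLindelof.of_time_independent
    · intro q hq
      rw [mem_closedBall, dist_eq_norm, Real.coe_toNNReal _ hRp] at hq
      rw [Real.coe_toNNReal _ (by positivity)]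
      have h1 := hLip q x
      have h2 : ‖F q a‖ ≤ ‖F x a‖ + ‖F q a - F x a‖ := by
        have := norm_add_le (F x a) (F q a - F x a)
        simpa using this
      nlinarith [mul_le_mul_of_nonneg_left hq hL]
    · exact hLW.lipschitzOnWith
    · rw [Real.coe_toNNReal _ (by positivity), Real.coe_toNNReal _ hRp]
      simp only [sub_zero, NNReal.coe_zero]
      rw [max_eq_left hτ]
      apply le_of_eq
      field_simp
  obtain ⟨p, hp0, hp⟩ := hPL.exists_eq_forall_mem_Icc_hasDerivWithinAt₀
  have hpc : ContinuousOn p (Icc 0 (1 / (L + 1))) := fun t ht => (hp t ht).continuousWithinAt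
  have hFc : ContinuousOn (fun s => F (p s) a) (Icc 0 (1 / (L + 1))) :=
    hLW.continuous.comp_continuousOn hpc
  refine ⟨p, hp0, measurable_const, fun _ => ha, ?_, ?_⟩
  · apply ContinuousOn.intervalIntegrable
    rwa [uIcc_of_le hτ]
  · intro t ht
    have hsub : Icc 0 t ⊆ Icc 0 (1 / (L + 1)) := Icc_subset_Icc le_rfl ht.2
    rw [intervalIntegral.integral_eq_sub_of_hasDerivAt_of_le ht.1 (hpc.mono hsub)
      (f' := fun s => F (p s) a)]
    · abel
    · intro s hs
      exact (hp s (hsub ⟨hs.1.le, hs.2.le⟩)).hasDerivAt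
        (Icc_mem_nhds hs.1 (hs.2.trans_le ht.2))
    · apply ContinuousOn.intervalIntegrable
      rw [uIcc_of_le ht.1]
      exact hFc.mono hsub

lemma exists_global [CompleteSpace E] {L : ℝ} (hL : 0 ≤ L) {a : U} (ha : a ∈ A)
    (hLip : ∀ p q, ‖F p a - F q a‖ ≤ L * ‖p - q‖) (x : E) :
    ∃ p : ℝ → E, p 0 = x ∧ ∀ T, 0 ≤ T → TrajOn F A T (fun _ => a) p := by
  choose Φ hΦ0 hΦ using fun y => exists_short (F := F) hL ha hLip y
  set τ : ℝ := 1 / (L + 1) with hτd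
  have hτ : 0 < τ := by positivity
  let X : ℕ → E := fun n => Nat.rec x (fun _ y => Φ y τ) n
  have hX : ∀ n, X (n + 1) = Φ (X n) τ := fun n => rfl
  let p : ℝ → E := fun t => Φ (X ⌊t / τ⌋₊) (t - ⌊t / τ⌋₊ * τ)
  have hpn : ∀ n : ℕ, p (n * τ) = X n := by
    intro n
    have : ((n : ℝ) * τ) / τ = n := by field_simp
    simp only [p, this, Nat.floor_natCast, sub_self, hΦ0]
  have hp0 : p 0 = x := (by simpa using hpn 0 : p 0 = X 0)
  have key : ∀ n : ℕ, TrajOn F A (n * τ) (fun _ => a) p := by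
    intro n
    induction n with
    | zero =>
      refine ⟨measurable_const, fun _ => ha, by simp, ?_⟩
      intro t ht
      have : t = 0 := by
        have := ht.1; have := ht.2; simp at *; linarith
      subst this; simp
    | succ n ih =>
      have hn : 0 ≤ (n : ℝ) * τ := by positivity
      have hj : Φ (X n) 0 = p (n * τ) := by rw [hpn, hΦ0]
      have h := ih.concat hn hτ.le (hΦ (X n)) hj
      have e : (catAt (n * τ) (fun _ => a) fun _ => a) = (fun _ : ℝ => a) := by
        funext s; unfold catAt; split_ifs <;> rfl
      rw [e] at h
      have e2 : ((n + 1 : ℕ) : ℝ) * τ = n * τ + τ := by push_cast; ring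
      rw [e2]
      refine h.congr (by positivity) ?_
      intro t ht
      rcases le_total t (n * τ) with h1 | h1
      · rw [catAt_le hj h1]
      · rw [catAt_ge h1]
        rcases ht.2.lt_or_eq with h2 | h2
        · have : ⌊t / τ⌋₊ = n := by
            rw [Nat.floor_eq_iff (div_nonneg ht.1 hτ.le), le_div_iff₀ hτ, div_lt_iff₀ hτ]
            exact ⟨h1, by linarith⟩
          simp only [p, this]
        · rw [h2, ← e2, hpn, hX, e2]; simp
  refine ⟨p, hp0, fun T hT => ?_⟩
  obtain ⟨n, hn⟩ := exists_nat_ge (T / τ)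
  exact (key n).mono hT ((div_le_iff₀ hτ).1 hn)

end traj

end

noncomputable section
section traj2
variable {E U : Type*} [NormedAddCommGroup E] [NormedSpace ℝ E] [MeasurableSpace U]
  {F : E → U → E} {A : Set U}

lemma exists_finset_control [CompleteSpace E] (hA : A.Nonempty) {L : ℝ} (hL : 0 ≤ L)
    (hLip : ∀ a ∈ A, ∀ p q, ‖F p a - F q a‖ ≤ L * ‖p - q‖) (h : U → E)
    {ι : Type*} (a : ι → U) (ha : ∀ i, a i ∈ A) (w : ι → ℝ) (hw : ∀ i, 0 ≤ w i)
    (s : Finset ι) :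
    ∀ x : E, ∃ (α : ℝ → U) (p : ℝ → E), p 0 = x ∧ TrajOn F A (∑ i ∈ s, w i) α p ∧
      IntervalIntegrable (fun t => h (α t)) volume 0 (∑ i ∈ s, w i) ∧
      ∫ t in (0:ℝ)..(∑ i ∈ s, w i), h (α t) = ∑ i ∈ s, w i • h (a i) := by
  classical
  induction s using Finset.induction_on with
  | empty =>
    intro x
    obtain ⟨b, hb⟩ := hA
    obtain ⟨p, hp, hpt⟩ := exists_global (F := F) hL hb (hLip b hb) x
    exact ⟨fun _ => b, p, hp, by simpa using hpt 0 le_rfl, by simp, by simp⟩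
  | insert i s his ih =>
    intro x
    obtain ⟨p, hp, hpt⟩ := exists_global (F := F) hL (ha i) (hLip _ (ha i)) x
    obtain ⟨α, q, hq, hqt, hi, hie⟩ := ih (p (w i))
    have hs : 0 ≤ ∑ i ∈ s, w i := Finset.sum_nonneg fun j _ => hw j
    have hc := (hpt (w i) (hw i)).concat (hw i) hs hqt hq
    have e : (fun t => h (catAt (w i) (fun _ => a i) α t)) =
        catAt (w i) (fun _ => h (a i)) (fun t => h (α t)) := by
      funext t; unfold catAt; split_ifs <;> rfl
    rw [Finset.sum_insert his, Finset.sum_insert his]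
    refine ⟨_, _, ?_, hc, ?_, ?_⟩
    · rw [catAt_le hq (hw i), hp]
    · rw [e]
      exact catAt_integrable (hw i) hs (by simp) hi
    · rw [e, catAt_integral (hw i) hs (by simp) hi, hie]
      simp

lemma TrajOn.bound {L : ℝ} (hL : 0 ≤ L)
    (hLip : ∀ a ∈ A, ∀ p q, ‖F p a - F q a‖ ≤ L * ‖p - q‖) {D : ℝ} (hD : 0 ≤ D)
    (hLD : L * D ≤ 1 / 2) {α : ℝ → U} {p : ℝ → E} (h : TrajOn F A D α p) {G : ℝ}
    (hG : ∀ a ∈ A, ‖F (p 0) a‖ ≤ G) : ∀ s ∈ Icc 0 D, ‖p s - p 0‖ ≤ 2 * G * D := by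
  have hc : ContinuousOn (fun s => ‖p s - p 0‖) (Icc 0 D) :=
    ((h.continuousOn hD).sub continuousOn_const).norm
  obtain ⟨m, hm, hmax⟩ := isCompact_Icc.exists_isMaxOn ⟨0, le_rfl, hD⟩ hc
  have hmax' : ∀ s ∈ Icc 0 D, ‖p s - p 0‖ ≤ ‖p m - p 0‖ := fun s hs => hmax hs
  have hG0 : 0 ≤ G := (norm_nonneg _).trans (hG _ (h.mem 0))
  have h1 : ‖p m - p 0‖ ≤ (G + L * ‖p m - p 0‖) * |m - 0| := by
    have e : p m - p 0 = ∫ s in (0:ℝ)..m, F (p s) (α s) := by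
      rw [h.eqn m hm]; abel
    rw [e]
    nth_rewrite 2 [← e]
    apply intervalIntegral.norm_integral_le_of_norm_le_const
    intro s hs
    rw [uIoc_of_le hm.1] at hs
    have hsD : s ∈ Icc 0 D := ⟨hs.1.le, hs.2.trans hm.2⟩
    have h2 := hLip _ (h.mem s) (p s) (p 0)
    have h3 : ‖F (p s) (α s)‖ ≤ ‖F (p 0) (α s)‖ + ‖F (p s) (α s) - F (p 0) (α s)‖ := by
      have := norm_add_le (F (p 0) (α s)) (F (p s) (α s) - F (p 0) (α s))
      simpa using this
    have h4 := mul_le_mul_of_nonneg_left (hmax' s hsD) hL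
    linarith [hG _ (h.mem s)]
  rw [sub_zero, abs_of_nonneg hm.1] at h1
  have h5 : ‖p m - p 0‖ ≤ (G + L * ‖p m - p 0‖) * D :=
    h1.trans (mul_le_mul_of_nonneg_left hm.2 (by positivity))
  intro s hs
  have := hmax' s hs
  nlinarith [mul_le_mul_of_nonneg_right hLD (norm_nonneg (p m - p 0))]

lemma cycle [CompleteSpace E] (hA : A.Nonempty) {L : ℝ} (hL : 0 ≤ L)
    (hLip : ∀ a ∈ A, ∀ p q, ‖F p a - F q a‖ ≤ L * ‖p - q‖)
    {ι : Type*} [Fintype ι] (a : ι → U) (ha : ∀ i, a i ∈ A) (w : ι → ℝ) (hw : ∀ i, 0 ≤ w i)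
    (hw1 : ∑ i, w i = 1) {D : ℝ} (hD : 0 ≤ D) (hLD : L * D ≤ 1 / 2) (x : E) {G : ℝ}
    (hG : ∀ a ∈ A, ‖F x a‖ ≤ G) :
    ∃ (α : ℝ → U) (p : ℝ → E), p 0 = x ∧ TrajOn F A D α p ∧
      (∀ s ∈ Icc 0 D, ‖p s - x‖ ≤ 2 * G * D) ∧
      ‖p D - x - D • ∑ i, w i • F x (a i)‖ ≤ 2 * L * G * D ^ 2 := by
  obtain ⟨α, p, hp, hpt, hi, hie⟩ := exists_finset_control hA hL hLip (fun b => F x b) a ha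
    (fun i => D * w i) (fun i => mul_nonneg hD (hw i)) Finset.univ x
  have e : ∑ i, D * w i = D := by rw [← Finset.mul_sum, hw1, mul_one]
  rw [e] at hpt hi hie
  have hb := hpt.bound hL hLip hD hLD (G := G) (by rwa [hp])
  rw [hp] at hb
  refine ⟨α, p, hp, hpt, hb, ?_⟩
  have e2 : p D - x - D • ∑ i, w i • F x (a i) =
      ∫ s in (0:ℝ)..D, (F (p s) (α s) - F x (α s)) := by
    rw [intervalIntegral.integral_sub hpt.int hi, hie, hpt.eqn D ⟨hD, le_rfl⟩, hp, Finset.smul_sum]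
    simp only [smul_smul]
    abel
  rw [e2]
  have h1 : ‖∫ s in (0:ℝ)..D, (F (p s) (α s) - F x (α s))‖ ≤ (L * (2 * G * D)) * |D - 0| := by
    apply intervalIntegral.norm_integral_le_of_norm_le_const
    intro s hs
    rw [uIoc_of_le hD] at hs
    exact (hLip _ (hpt.mem s) _ _).trans
      (mul_le_mul_of_nonneg_left (hb s ⟨hs.1.le, hs.2⟩) hL)
  rw [sub_zero, abs_of_nonneg hD] at h1
  linarith

end traj2

section conv
variable {H : Type*} [NormedAddCommGroup H] [InnerProductSpace ℝ H] [ProperSpace H]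

lemma finite_ctrl {Z U : Type*} [TopologicalSpace Z] {A : Set U} (hA : A.Nonempty)
    (g : Z → U → H) (hg : ∀ a ∈ A, Continuous fun z => g z a) {K : Set Z} (hK : IsCompact K)
    {r : ℝ} (hc : ∀ z ∈ K, ∀ u : H, ‖u‖ = 1 → ∃ a ∈ A, r < ⟪u, g z a⟫) :
    ∃ s : Finset U, (s : Set U) ⊆ A ∧ s.Nonempty ∧
      ∀ z ∈ K, ∀ u : H, ‖u‖ = 1 → ∃ a ∈ s, r < ⟪u, g z a⟫ := by
  classical
  obtain ⟨b, hb⟩ := hA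
  have hKS : IsCompact (K ×ˢ sphere (0 : H) 1) := hK.prod (isCompact_sphere 0 1)
  obtain ⟨t, ht⟩ := hKS.elim_finite_subcover
    (fun a : A => {q : Z × H | r < ⟪q.2, g q.1 a⟫})
    (fun a => isOpen_lt continuous_const
      (Continuous.inner continuous_snd ((hg a a.2).comp continuous_fst)))
    (by
      rintro ⟨z, u⟩ ⟨hz, hu⟩
      obtain ⟨a, ha, h⟩ := hc z hz u (by simpa using hu)
      exact mem_iUnion.2 ⟨⟨a, ha⟩, h⟩)
  refine ⟨insert b (t.image Subtype.val), ?_, by simp, ?_⟩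
  · intro a ha
    simp only [Finset.coe_insert, Finset.coe_image, mem_insert_iff, mem_image] at ha
    rcases ha with rfl | ⟨c, _, rfl⟩
    · exact hb
    · exact c.2
  · intro z hz u hu
    have := ht (show (z, u) ∈ K ×ˢ sphere (0 : H) 1 from ⟨hz, by simpa using hu⟩)
    simp only [mem_iUnion] at this
    obtain ⟨a, hat, h⟩ := this
    exact ⟨a, by simp [hat], h⟩

lemma halfspace_of_closure {U : Type*} {A : Set U} (g : U → H) {r : ℝ} (hr : 0 < r)
    (hc : ball (0 : H) r ⊆ closure (convexHull ℝ (g '' A))) (u : H) (hu : ‖u‖ = 1) :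
    ∃ a ∈ A, r / 2 < ⟪u, g a⟫ := by
  by_contra hcon
  push Not at hcon
  have hconv : Convex ℝ {v : H | ⟪u, v⟫ ≤ r / 2} :=
    convex_halfSpace_le (IsLinearMap.mk (fun x y => inner_add_right u x y)
      (fun c x => by simp [inner_smul_right])) _
  have hcl : IsClosed {v : H | ⟪u, v⟫ ≤ r / 2} :=
    isClosed_le (by fun_prop) continuous_const
  have hsub : closure (convexHull ℝ (g '' A)) ⊆ {v : H | ⟪u, v⟫ ≤ r / 2} := by
    apply closure_minimal _ hcl
    apply convexHull_min _ hconv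
    rintro _ ⟨a, ha, rfl⟩
    exact hcon a ha
  have hv : (3 * r / 4) • u ∈ ball (0 : H) r := by
    rw [mem_ball_zero_iff, norm_smul, hu, Real.norm_of_nonneg (by positivity)]
    linarith
  have := hsub (hc hv)
  simp only [mem_ofPred_eq, inner_smul_right, real_inner_self_eq_norm_sq, hu] at this
  linarith

lemma conv_mem [CompleteSpace H] {ι : Type*} [Fintype ι] [Nonempty ι] (g : ι → H) {r : ℝ} (hr : 0 ≤ r)
    (hc : ∀ u : H, ‖u‖ = 1 → ∃ i, r < ⟪u, g i⟫) (v : H) (hv : ‖v‖ ≤ r) :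
    ∃ w : ι → ℝ, (∀ i, 0 ≤ w i) ∧ ∑ i, w i = 1 ∧ ∑ i, w i • g i = v := by
  classical
  let T : (ι → ℝ) →ₗ[ℝ] H := Fintype.linearCombination ℝ g
  have hT : ∀ w, T w = ∑ i, w i • g i := fun w => Fintype.linearCombination_apply ℝ g w
  have hTc : Continuous T := T.continuous_of_finiteDimensional
  have hC : IsCompact (T '' stdSimplex ℝ ι) := (isCompact_stdSimplex ℝ ι).image hTc
  have hconv : Convex ℝ (T '' stdSimplex ℝ ι) := (convex_stdSimplex ℝ ι).linear_image T
  have hgi : ∀ i, g i ∈ T '' stdSimplex ℝ ι := fun i =>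
    ⟨Pi.single i 1, single_mem_stdSimplex ℝ i, by rw [hT]; simp [Pi.single_apply]⟩
  suffices h : v ∈ T '' stdSimplex ℝ ι by
    obtain ⟨w, hw, hwv⟩ := h
    exact ⟨w, hw.1, hw.2, by rw [← hT, hwv]⟩
  by_contra hn
  obtain ⟨φ, c, h1, h2⟩ := geometric_hahn_banach_closed_point hconv hC.isClosed hn
  set u : H := (InnerProductSpace.toDual ℝ H).symm φ with hu
  have hφ : ∀ z, φ z = ⟪u, z⟫ := fun z => by rw [hu, InnerProductSpace.toDual_symm_apply]
  obtain ⟨i0⟩ := ‹Nonempty ι›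
  have hu0 : u ≠ 0 := by
    intro h0
    have a1 := h1 _ (hgi i0)
    rw [hφ, h0, inner_zero_left] at a1
    rw [hφ, h0, inner_zero_left] at h2
    linarith
  have hup : 0 < ‖u‖ := norm_pos_iff.2 hu0
  obtain ⟨i, hi⟩ := hc (‖u‖⁻¹ • u) (by rw [norm_smul, norm_inv, norm_norm, inv_mul_cancel₀ hup.ne'])
  rw [real_inner_smul_left, lt_inv_mul_iff₀ hup] at hi
  have a1 := h1 _ (hgi i)
  rw [hφ] at a1 h2
  have := real_inner_le_norm u v
  nlinarith [mul_le_mul_of_nonneg_left hv hup.le]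

end conv
end

noncomputable section
section sys
variable {X Y U : Type*} [NormedAddCommGroup X] [NormedSpace ℝ X] [ProperSpace X]
  [NormedAddCommGroup Y] [InnerProductSpace ℝ Y] [ProperSpace Y] [MeasurableSpace U]

/-- Standing hypotheses on the control system. -/
structure SysHyp (A : Set U) (f : X → Y → U → X) (g : X → Y → U → Y) (L Q : ℝ) : Prop where
  ne : A.Nonempty
  hL : 0 ≤ L
  hQ : 0 ≤ Q
  fLip : ∀ (x₁ x₂ : X) (y₁ y₂ : Y), ∀ a ∈ A,
      ‖f x₁ y₁ a - f x₂ y₂ a‖ ≤ L * (‖x₁ - x₂‖ + ‖y₁ - y₂‖)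
  gLip : ∀ (x₁ x₂ : X) (y₁ y₂ : Y), ∀ a ∈ A,
      ‖g x₁ y₁ a - g x₂ y₂ a‖ ≤ L * (‖x₁ - x₂‖ + ‖y₁ - y₂‖)
  fB : ∀ x y, ∀ a ∈ A, ‖f x y a‖ ≤ Q
  ctrl : ∀ K : Set (X × Y), IsCompact K → ∃ r > 0, ∀ z ∈ K, ∀ u : Y, ‖u‖ = 1 →
      ∃ a ∈ A, r < ⟪u, g z.1 z.2 a⟫

variable {A : Set U} {f : X → Y → U → X} {g : X → Y → U → Y} {L Q : ℝ}

lemma SysHyp.neg (h : SysHyp A f g L Q) :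
    SysHyp A (fun x y a => - f x y a) (fun x y a => - g x y a) L Q where
  ne := h.ne
  hL := h.hL
  hQ := h.hQ
  fLip := fun x₁ x₂ y₁ y₂ a ha => by
    have := h.fLip x₁ x₂ y₁ y₂ a ha
    rwa [← neg_sub', norm_neg]
  gLip := fun x₁ x₂ y₁ y₂ a ha => by
    have := h.gLip x₁ x₂ y₁ y₂ a ha
    rwa [← neg_sub', norm_neg]
  fB := fun x y a ha => by rw [norm_neg]; exact h.fB x y a ha
  ctrl := fun K hK => by
    obtain ⟨r, hr, H⟩ := h.ctrl K hK
    refine ⟨r, hr, fun z hz u hu => ?_⟩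
    obtain ⟨a, ha, h2⟩ := H z hz (-u) (by rwa [norm_neg])
    exact ⟨a, ha, by rwa [inner_neg_right, ← inner_neg_left]⟩

/-- The joint vector field. -/
def Fe (f : X → Y → U → X) (g : X → Y → U → Y) (ε : ℝ) : X × Y → U → X × Y :=
  fun p a => (ε • f p.1 p.2 a, g p.1 p.2 a)

lemma SysHyp.lip (h : SysHyp A f g L Q) {ε : ℝ} (hε : 0 < ε) (hε1 : ε ≤ 1) :
    ∀ a ∈ A, ∀ p q, ‖Fe f g ε p a - Fe f g ε q a‖ ≤ 2 * L * ‖p - q‖ := by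
  intro a ha p q
  have h1 : ‖p.1 - q.1‖ ≤ ‖p - q‖ := norm_fst_le (p - q)
  have h2 : ‖p.2 - q.2‖ ≤ ‖p - q‖ := norm_snd_le (p - q)
  have h3 : L * (‖p.1 - q.1‖ + ‖p.2 - q.2‖) ≤ 2 * L * ‖p - q‖ := by
    nlinarith [mul_le_mul_of_nonneg_left (add_le_add h1 h2) h.hL]
  rw [Prod.norm_def]
  apply max_le
  · simp only [Fe, Prod.fst_sub]
    rw [← smul_sub, norm_smul, Real.norm_of_nonneg hε.le]
    have := h.fLip p.1 q.1 p.2 q.2 a ha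
    have h4 := norm_nonneg (f p.1 p.2 a - f q.1 q.2 a)
    nlinarith
  · simp only [Fe, Prod.snd_sub]
    exact (h.gLip p.1 q.1 p.2 q.2 a ha).trans h3

lemma SysHyp.g_cont (h : SysHyp A f g L Q) (a : U) (ha : a ∈ A) :
    Continuous fun z : X × Y => g z.1 z.2 a := by
  have : LipschitzWith (Real.toNNReal (2 * L)) fun z : X × Y => g z.1 z.2 a := by
    apply LipschitzWith.of_dist_le_mul
    intro p q
    rw [dist_eq_norm, dist_eq_norm, Real.coe_toNNReal _ (by linarith [h.hL])]
    refine le_trans ?_ (h.lip (ε := 1) one_pos le_rfl a ha p q)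
    exact norm_snd_le (Fe f g 1 p a - Fe f g 1 q a)
  exact this.continuous

lemma SysHyp.fst_bound (h : SysHyp A f g L Q) {ε : ℝ} (hε : 0 < ε) {T : ℝ}
    {α : ℝ → U} {p : ℝ → X × Y} (hp : TrajOn (Fe f g ε) A T α p) :
    ∀ s ∈ Icc 0 T, ‖(p s).1 - (p 0).1‖ ≤ ε * Q * s := by
  intro s hs
  have e : (p s).1 - (p 0).1 = ∫ t in (0:ℝ)..s, ε • f (p t).1 (p t).2 (α t) := by
    rw [hp.eqn s hs, Prod.fst_add, add_sub_cancel_left]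
    have := (ContinuousLinearMap.fst ℝ X Y).intervalIntegral_comp_comm
      (hp.mono hs.1 hs.2).int
    exact this.symm
  rw [e]
  have := intervalIntegral.norm_integral_le_of_norm_le_const (a := 0) (b := s) (C := ε * Q)
    (f := fun t => ε • f (p t).1 (p t).2 (α t)) (by
      intro t _
      rw [norm_smul, Real.norm_of_nonneg hε.le]
      exact mul_le_mul_of_nonneg_left (h.fB _ _ _ (hp.mem t)) hε.le)
  rwa [sub_zero, abs_of_nonneg hs.1] at this

lemma SysHyp.one_cycle (h : SysHyp A f g L Q) {K : Set (X × Y)} (hK : IsCompact K) :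
    ∃ r > 0, ∃ C ≥ 0, ∃ τ₀ > 0, ∀ ε, 0 < ε → ε ≤ 1 → ∀ p ∈ K, ∀ v : Y, ‖v‖ ≤ r →
      ∀ τ, 0 ≤ τ → τ ≤ τ₀ → ∃ (α : ℝ → U) (q : ℝ → X × Y), q 0 = p ∧
        TrajOn (Fe f g ε) A τ α q ∧ (∀ s ∈ Icc 0 τ, ‖q s - p‖ ≤ C * τ) ∧
        ‖(q τ).2 - p.2 - τ • v‖ ≤ C * τ ^ 2 := by
  obtain ⟨r, hr, hctrl⟩ := h.ctrl K hK
  obtain ⟨s, hsA, hsne, hs⟩ := finite_ctrl h.ne (fun (z : X × Y) a => g z.1 z.2 a) h.g_cont hK hctrl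
  have hbd : ∀ a : s, ∃ G, 0 ≤ G ∧ ∀ z ∈ K, ‖g z.1 z.2 a‖ ≤ G := by
    intro a
    obtain ⟨G, hG⟩ := hK.exists_bound_of_continuousOn (h.g_cont a (hsA a.2)).continuousOn
    exact ⟨max G 0, le_max_right _ _, fun z hz => (hG z hz).trans (le_max_left _ _)⟩
  choose G hG0 hG using hbd
  set Gt : ℝ := Q + ∑ a, G a with hGt
  have hsum : 0 ≤ ∑ a, G a := Finset.sum_nonneg fun a _ => hG0 a
  have hGt0 : 0 ≤ Gt := by have := h.hQ; positivity
  have hL := h.hL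
  refine ⟨r, hr, 2 * Gt + 4 * L * Gt, by positivity, 1 / (4 * L + 1), by positivity, ?_⟩
  intro ε hε hε1 p hp v hv τ hτ hττ
  have : Nonempty s := hsne.coe_sort
  obtain ⟨w, hw, hw1, hwv⟩ := conv_mem (fun a : s => g p.1 p.2 a) hr.le (by
    intro u hu
    obtain ⟨a, ha, h1⟩ := hs p hp u hu
    exact ⟨⟨a, ha⟩, h1⟩) v hv
  have hF : ∀ a ∈ (s : Set U), ‖Fe f g ε p a‖ ≤ Gt := by
    intro a ha
    rw [Prod.norm_def]
    apply max_le
    · simp only [Fe]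
      rw [norm_smul, Real.norm_of_nonneg hε.le]
      have h1 := h.fB p.1 p.2 a (hsA ha)
      have h2 := norm_nonneg (f p.1 p.2 a)
      nlinarith
    · simp only [Fe]
      have h1 := hG ⟨a, ha⟩ p hp
      have h2 : G ⟨a, ha⟩ ≤ ∑ a, G a :=
        Finset.single_le_sum (f := G) (fun a _ => hG0 a) (Finset.mem_univ _)
      have := h.hQ
      simp only at h1
      linarith
  have hLτ : 2 * L * τ ≤ 1 / 2 := by
    rw [le_div_iff₀ (by positivity)] at hττ
    nlinarith
  obtain ⟨α, q, hq0, hq, hqb, hqe⟩ := cycle (F := Fe f g ε) (A := (s : Set U)) hsne.to_set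
    (L := 2 * L) (by positivity) (fun a ha => h.lip hε hε1 a (hsA ha)) (fun a : s => (a : U))
    (fun a => a.2) w hw hw1 hτ hLτ p hF
  refine ⟨α, q, hq0, hq.mono_set hsA, ?_, ?_⟩
  · intro t ht
    refine (hqb t ht).trans ?_
    apply mul_le_mul_of_nonneg_right _ hτ
    nlinarith [mul_nonneg hL hGt0]
  · have h1 := (norm_snd_le _).trans hqe
    have e : (q τ - p - τ • ∑ i : s, w i • Fe f g ε p i).2 = (q τ).2 - p.2 - τ • v := by
      rw [← hwv]
      simp [Fe, Prod.snd_sum]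
    rw [e] at h1
    refine h1.trans ?_
    apply mul_le_mul_of_nonneg_right _ (by positivity)
    nlinarith [mul_nonneg hL hGt0]

end sys

lemma iterate_traj {E U : Type*} [NormedAddCommGroup E] [NormedSpace ℝ E] [MeasurableSpace U]
    {F : E → U → E} {A : Set U} (hA : A.Nonempty) {τ : ℝ} (hτ : 0 ≤ τ) (S : Set E)
    (I : ℕ → E → Prop) (n : ℕ)
    (step : ∀ j < n, ∀ p, I j p → ∃ (α : ℝ → U) (q : ℝ → E), q 0 = p ∧ TrajOn F A τ α q ∧
      (∀ s ∈ Icc 0 τ, q s ∈ S) ∧ I (j + 1) (q τ)) (p : E) (hp : I 0 p) (hpS : p ∈ S) :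
    ∃ (α : ℝ → U) (q : ℝ → E), q 0 = p ∧ TrajOn F A (n * τ) α q ∧
      (∀ s ∈ Icc 0 (n * τ), q s ∈ S) ∧ I n (q (n * τ)) := by
  suffices H : ∀ m ≤ n, ∃ (α : ℝ → U) (q : ℝ → E), q 0 = p ∧ TrajOn F A (m * τ) α q ∧
      (∀ s ∈ Icc 0 (m * τ), q s ∈ S) ∧ I m (q (m * τ)) from H n le_rfl
  intro m
  induction m with
  | zero =>
    intro _
    obtain ⟨b, hb⟩ := hA
    refine ⟨fun _ => b, fun _ => p, rfl, ⟨measurable_const, fun _ => hb, by simp, ?_⟩, ?_, hp⟩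
    · intro t ht
      have : t = 0 := by
        have h1 := ht.1; have h2 := ht.2; simp at h2; linarith
      subst this; simp
    · intro s _; exact hpS
  | succ m ih =>
    intro hm
    obtain ⟨α, q, hq0, hq, hqS, hqI⟩ := ih (by omega)
    obtain ⟨β, q', hq0', hq', hqS', hqI'⟩ := step m (by omega) _ hqI
    have hmτ : 0 ≤ (m : ℝ) * τ := by positivity
    have e2 : ((m + 1 : ℕ) : ℝ) * τ = m * τ + τ := by push_cast; ring
    rw [e2]
    refine ⟨_, _, ?_, hq.concat hmτ hτ hq' hq0', ?_, ?_⟩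
    · rw [catAt_le hq0' hmτ, hq0]
    · intro s hs
      rcases le_total s (m * τ) with h1 | h1
      · rw [catAt_le hq0' h1]; exact hqS s ⟨hs.1, h1⟩
      · rw [catAt_ge h1]; exact hqS' _ ⟨by linarith, by linarith [hs.2]⟩
    · rw [catAt_ge (by linarith), add_sub_cancel_left]; exact hqI'

section sys2
variable {X Y U : Type*} [NormedAddCommGroup X] [NormedSpace ℝ X] [ProperSpace X]
  [NormedAddCommGroup Y] [InnerProductSpace ℝ Y] [ProperSpace Y] [MeasurableSpace U]
variable {A : Set U} {f : X → Y → U → X} {g : X → Y → U → Y} {L Q : ℝ}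

lemma SysHyp.extend (h : SysHyp A f g L Q) {ε : ℝ} (hε : 0 < ε) (hε1 : ε ≤ 1) {T : ℝ} (hT : 0 ≤ T)
    {α : ℝ → U} {p : ℝ → X × Y} (hp : TrajOn (Fe f g ε) A T α p) :
    ∃ (β : ℝ → U) (q : ℝ → X × Y), (∀ s, s ≤ T → q s = p s) ∧
      ∀ T', 0 ≤ T' → TrajOn (Fe f g ε) A T' β q := by
  obtain ⟨b, hb⟩ := h.ne
  have hL := h.hL
  obtain ⟨q, hq0, hq⟩ := exists_global (F := Fe f g ε) (by positivity) hb (h.lip hε hε1 b hb) (p T)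
  refine ⟨catAt T α fun _ => b, catAt T p q, fun s hs => catAt_le hq0 hs, fun T' hT' => ?_⟩
  exact (hp.concat hT hT' (hq T' hT') hq0).mono hT' (by linarith)

lemma SysHyp.bounded_ctrl (h : SysHyp A f g L Q) (x0 : X) (y0 : Y) {t1 : ℝ} (ht1 : 0 ≤ t1) :
    ∃ R : ℝ, ∀ ε, 0 < ε → ε ≤ 1 → ∀ p : X × Y, ‖p.1 - x0‖ ≤ 1 → ‖p.2 - y0‖ ≤ 1 →
      ∀ T, 0 ≤ T → ε * T ≤ t1 → ∃ (α : ℝ → U) (q : ℝ → X × Y), q 0 = p ∧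
        (∀ T', 0 ≤ T' → TrajOn (Fe f g ε) A T' α q) ∧
        ∀ s ∈ Icc 0 T, q s ∈ closedBall (x0, y0) R := by
  have hQ := h.hQ
  have hK : IsCompact (closedBall x0 (1 + Q * (t1 + 1)) ×ˢ closedBall y0 1) :=
    (isCompact_closedBall _ _).prod (isCompact_closedBall _ _)
  obtain ⟨r, hr, C, hC, τ₀, hτ₀, hcyc⟩ := h.one_cycle hK
  obtain ⟨τ, hτ, hττ₀, hτ1, hτr, hτC⟩ : ∃ τ : ℝ, 0 < τ ∧ τ ≤ τ₀ ∧ τ ≤ 1 ∧ τ * r ≤ 1 ∧ C * τ ≤ r := by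
    refine ⟨min τ₀ (min 1 (min (1 / r) (r / (C + 1)))), by positivity, min_le_left _ _,
      (min_le_right _ _).trans (min_le_left _ _), ?_, ?_⟩
    · have : min τ₀ (min 1 (min (1 / r) (r / (C + 1)))) ≤ 1 / r :=
        (min_le_right _ _).trans ((min_le_right _ _).trans (min_le_left _ _))
      rwa [le_div_iff₀ hr] at this
    · have h1 : min τ₀ (min 1 (min (1 / r) (r / (C + 1)))) ≤ r / (C + 1) :=
        (min_le_right _ _).trans ((min_le_right _ _).trans (min_le_right _ _))
      have h2 : 0 ≤ min τ₀ (min 1 (min (1 / r) (r / (C + 1)))) := by positivity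
      rw [le_div_iff₀ (by positivity)] at h1
      nlinarith
  refine ⟨1 + Q * (t1 + 1) + 1 + C * τ, ?_⟩
  intro ε hε hε1 p hp1 hp2 T hT hεT
  set n : ℕ := ⌈T / τ⌉₊ with hn
  have hn1 : T ≤ n * τ := by rw [← div_le_iff₀ hτ]; exact Nat.le_ceil _
  have hn2 : n * τ ≤ T + 1 := by
    have := (Nat.ceil_lt_add_one (div_nonneg hT hτ.le)).le
    have h2 := mul_le_mul_of_nonneg_right this hτ.le
    rw [add_mul, div_mul_cancel₀ _ hτ.ne'] at h2
    rw [← hn] at h2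
    linarith
  have hn3 : ε * (n * τ) ≤ t1 + 1 := by
    have := mul_le_mul_of_nonneg_left hn2 hε.le
    linarith
  obtain ⟨α, q, hq0, hq, hqS, -⟩ := iterate_traj (F := Fe f g ε) h.ne hτ.le
    (closedBall (x0, y0) (1 + Q * (t1 + 1) + 1 + C * τ))
    (fun j q => ‖q.1 - x0‖ ≤ 1 + ε * Q * (j * τ) ∧ ‖q.2 - y0‖ ≤ 1) n
    (by
      rintro j hj q ⟨hq1, hq2⟩
      have hjn : (j : ℝ) * τ ≤ n * τ := by gcongr
      have hj0 : 0 ≤ (j : ℝ) * τ := by positivity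
      have hq1' : ‖q.1 - x0‖ ≤ 1 + Q * (t1 + 1) := by
        have : ε * (j * τ) ≤ t1 + 1 := by nlinarith
        nlinarith [mul_le_mul_of_nonneg_left this hQ]
      have hqK : q ∈ closedBall x0 (1 + Q * (t1 + 1)) ×ˢ closedBall y0 1 :=
        ⟨by rwa [mem_closedBall, dist_eq_norm], by rwa [mem_closedBall, dist_eq_norm]⟩
      obtain ⟨α, q', hq0', hq', hqb, hqe⟩ := hcyc ε hε hε1 q hqK (-(r • (q.2 - y0)))
        (by rw [norm_neg, norm_smul, Real.norm_of_nonneg hr.le]; nlinarith) τ hτ.le hττ₀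
      refine ⟨α, q', hq0', hq', ?_, ?_, ?_⟩
      · intro s hs
        rw [mem_closedBall, dist_eq_norm]
        have h1 := hqb s hs
        have h2 : ‖q - (x0, y0)‖ ≤ 1 + Q * (t1 + 1) + 1 := by
          rw [Prod.norm_def]
          apply max_le
          · simp only [Prod.fst_sub]; linarith
          · simp only [Prod.snd_sub]; nlinarith
        have h3 := norm_add_le (q' s - q) (q - (x0, y0))
        rw [sub_add_sub_cancel] at h3
        linarith
      · have h1 := h.fst_bound hε hq' τ ⟨hτ.le, le_rfl⟩
        rw [hq0'] at h1
        have h3 := norm_add_le ((q' τ).1 - q.1) (q.1 - x0)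
        rw [sub_add_sub_cancel] at h3
        push_cast
        linarith
      · have e : (q' τ).2 - y0 = ((q' τ).2 - q.2 - τ • (-(r • (q.2 - y0)))) +
            (1 - τ * r) • (q.2 - y0) := by
          rw [sub_smul, one_smul, mul_smul, smul_neg]; abel
        rw [e]
        have h3 := norm_add_le ((q' τ).2 - q.2 - τ • (-(r • (q.2 - y0))))
          ((1 - τ * r) • (q.2 - y0))
        rw [norm_smul, Real.norm_of_nonneg (by linarith : 0 ≤ 1 - τ * r)] at h3
        have h4 : (1 - τ * r) * ‖q.2 - y0‖ ≤ (1 - τ * r) * 1 :=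
          mul_le_mul_of_nonneg_left hq2 (by linarith)
        have h5 : C * τ ^ 2 ≤ r * τ := by nlinarith
        linarith)
    p (by simpa using ⟨hp1, hp2⟩)
    (by
      rw [mem_closedBall, dist_eq_norm, Prod.norm_def]
      have : 0 ≤ C * τ := by positivity
      have h7 : 0 ≤ Q * (t1 + 1) := by positivity
      apply max_le
      · simp only [Prod.fst_sub]; linarith
      · simp only [Prod.snd_sub]; linarith)
  obtain ⟨β, q2, hq2, hq2t⟩ := h.extend hε hε1 (by positivity) hq
  refine ⟨β, q2, by rw [hq2 0 (by positivity), hq0], hq2t, fun s hs => ?_⟩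
  rw [hq2 s (hs.2.trans hn1)]
  exact hqS s ⟨hs.1, hs.2.trans hn1⟩

lemma SysHyp.steer (h : SysHyp A f g L Q) (x0 : X) (y0 z0 : Y) :
    ∃ T > 0, ∃ R : ℝ, ∀ δ > 0, ∃ ρ > 0, ∃ ε₀ > 0, ∀ ε, 0 < ε → ε ≤ ε₀ → ∀ p : X × Y,
      ‖p - (x0, y0)‖ ≤ ρ → ∃ (α : ℝ → U) (q : ℝ → X × Y), q 0 = p ∧
        TrajOn (Fe f g ε) A T α q ∧ (∀ s ∈ Icc 0 T, q s ∈ closedBall (x0, y0) R) ∧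
        ‖q T - (x0, z0)‖ ≤ δ := by
  have hQ := h.hQ
  set w : Y := z0 - y0 with hw
  have hK : IsCompact (closedBall x0 1 ×ˢ closedBall y0 (‖w‖ + 1)) :=
    (isCompact_closedBall _ _).prod (isCompact_closedBall _ _)
  obtain ⟨r, hr, C, hC, τ₀, hτ₀, hcyc⟩ := h.one_cycle hK
  set σ : ℝ := r / (‖w‖ + 1) with hσ
  have hσ0 : 0 < σ := by positivity
  have hσw : ‖σ • w‖ ≤ r := by
    rw [norm_smul, Real.norm_of_nonneg hσ0.le, hσ, div_mul_eq_mul_div, div_le_iff₀ (by positivity)]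
    nlinarith [norm_nonneg w]
  set T : ℝ := 1 / σ with hTd
  have hT : 0 < T := by positivity
  have hTσ : T * σ = 1 := by rw [hTd]; field_simp
  refine ⟨T, hT, 1 + (‖w‖ + 1) + C, ?_⟩
  intro δ hδ
  set d : ℝ := min δ 1 with hd
  have hd0 : 0 < d := by positivity
  have hd1 : d ≤ 1 := min_le_right _ _
  have hdδ : d ≤ δ := min_le_left _ _
  refine ⟨d / 2, by positivity, min 1 (d / (2 * (Q * T + 1))), by positivity, ?_⟩
  intro ε hε hεε p hp
  have hε1 : ε ≤ 1 := hεε.trans (min_le_left _ _)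
  have hεQ : ε * Q * T ≤ d / 2 := by
    have h1 : ε ≤ d / (2 * (Q * T + 1)) := hεε.trans (min_le_right _ _)
    rw [le_div_iff₀ (by positivity)] at h1
    nlinarith
  set e : ℝ := min τ₀ (min 1 (d / (2 * (C * T + 1)))) with he
  have he0 : 0 < e := by positivity
  set n : ℕ := ⌈T / e⌉₊ with hn
  have hn0 : 0 < (n : ℝ) := by
    rw [hn]; exact_mod_cast Nat.ceil_pos.2 (by positivity)
  set τ : ℝ := T / n with hτd
  have hτ : 0 < τ := by positivity
  have hτe : τ ≤ e := by
    rw [hτd, div_le_iff₀ hn0, mul_comm, ← div_le_iff₀ he0]; exact Nat.le_ceil _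
  have hnτ : n * τ = T := by rw [hτd]; field_simp
  have hττ₀ : τ ≤ τ₀ := hτe.trans (min_le_left _ _)
  have hτ1 : τ ≤ 1 := hτe.trans ((min_le_right _ _).trans (min_le_left _ _))
  have hτC : C * τ * T ≤ d / 2 := by
    have h1 : τ ≤ d / (2 * (C * T + 1)) :=
      hτe.trans ((min_le_right _ _).trans (min_le_right _ _))
    rw [le_div_iff₀ (by positivity)] at h1
    nlinarith
  have hp1 : ‖p.1 - x0‖ ≤ d / 2 := (norm_fst_le (p - (x0, y0))).trans hp
  have hp2 : ‖p.2 - y0‖ ≤ d / 2 := (norm_snd_le (p - (x0, y0))).trans hp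
  have hCτ : C * τ ≤ C := by nlinarith
  obtain ⟨α, q, hq0, hq, hqS, hqI1, hqI2⟩ := iterate_traj (F := Fe f g ε) h.ne hτ.le
    (closedBall (x0, y0) (1 + (‖w‖ + 1) + C))
    (fun j q => ‖q.1 - x0‖ ≤ d / 2 + ε * Q * (j * τ) ∧
      ‖q.2 - (p.2 + (j * τ) • (σ • w))‖ ≤ j * (C * τ ^ 2)) n
    (by
      rintro j hj q ⟨hq1, hq2⟩
      have hjn : (j : ℝ) * τ ≤ T := by rw [← hnτ]; gcongr
      have hj0 : 0 ≤ (j : ℝ) * τ := by positivity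
      have hq1' : ‖q.1 - x0‖ ≤ 1 := by
        have : ε * Q * (j * τ) ≤ ε * Q * T := by gcongr
        linarith
      have hq2' : ‖q.2 - y0‖ ≤ ‖w‖ + 1 := by
        have e1 : q.2 - y0 = (q.2 - (p.2 + (j * τ) • (σ • w))) + (p.2 - y0) +
            (j * τ) • (σ • w) := by abel
        have h1 := norm_add₃_le (a := q.2 - (p.2 + (j * τ) • (σ • w))) (b := p.2 - y0)
          (c := (j * τ) • (σ • w))
        rw [← e1] at h1
        have h2 : ‖((j : ℝ) * τ) • (σ • w)‖ ≤ ‖w‖ := by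
          rw [smul_smul, norm_smul, Real.norm_of_nonneg (by positivity)]
          have : j * τ * σ ≤ 1 := by rw [← hTσ]; gcongr
          nlinarith [norm_nonneg w]
        have h3 : j * (C * τ ^ 2) ≤ d / 2 := by
          have : j * (C * τ ^ 2) = C * τ * (j * τ) := by ring
          rw [this]
          refine le_trans ?_ hτC
          gcongr
        linarith
      have hqK : q ∈ closedBall x0 1 ×ˢ closedBall y0 (‖w‖ + 1) :=
        ⟨by rwa [mem_closedBall, dist_eq_norm], by rwa [mem_closedBall, dist_eq_norm]⟩
      obtain ⟨α, q', hq0', hq', hqb, hqe⟩ := hcyc ε hε hε1 q hqK (σ • w) hσw τ hτ.le hττ₀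
      refine ⟨α, q', hq0', hq', ?_, ?_, ?_⟩
      · intro s hs
        rw [mem_closedBall, dist_eq_norm]
        have h1 := hqb s hs
        have h2 : ‖q - (x0, y0)‖ ≤ 1 + (‖w‖ + 1) := by
          rw [Prod.norm_def]
          have := norm_nonneg w
          apply max_le
          · simp only [Prod.fst_sub]; linarith
          · simp only [Prod.snd_sub]; linarith
        have h3 := norm_add_le (q' s - q) (q - (x0, y0))
        rw [sub_add_sub_cancel] at h3
        linarith
      · have h1 := h.fst_bound hε hq' τ ⟨hτ.le, le_rfl⟩
        rw [hq0'] at h1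
        have h3 := norm_add_le ((q' τ).1 - q.1) (q.1 - x0)
        rw [sub_add_sub_cancel] at h3
        push_cast
        linarith
      · have e : (q' τ).2 - (p.2 + (((j + 1 : ℕ) : ℝ) * τ) • (σ • w)) =
            ((q' τ).2 - q.2 - τ • (σ • w)) + (q.2 - (p.2 + (j * τ) • (σ • w))) := by
          push_cast
          rw [add_mul, one_mul, add_smul]; abel
        rw [e]
        have h3 := norm_add_le ((q' τ).2 - q.2 - τ • (σ • w)) (q.2 - (p.2 + (j * τ) • (σ • w)))
        push_cast
        linarith)
    p (by simp only [CharP.cast_eq_zero, zero_mul, mul_zero, add_zero, zero_smul, sub_self,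
            norm_zero, le_refl, and_true]; exact hp1)
    (by
      rw [mem_closedBall, dist_eq_norm]
      have := norm_nonneg w
      linarith)
  rw [hnτ] at hq hqS hqI1 hqI2
  refine ⟨α, q, hq0, hq, hqS, ?_⟩
  rw [Prod.norm_def]
  apply max_le
  · simp only [Prod.fst_sub]; linarith
  · simp only [Prod.snd_sub]
    rw [smul_smul, hTσ, one_smul] at hqI2
    have h3 := norm_add_le ((q T).2 - (p.2 + w)) (p.2 - y0)
    have e1 : (q T).2 - (p.2 + w) + (p.2 - y0) = (q T).2 - z0 := by rw [hw]; abel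
    rw [e1] at h3
    have e2 : n * (C * τ ^ 2) = C * τ * T := by rw [← hnτ]; ring
    linarith

end sys2
end

noncomputable section

lemma seq_select {Z : Type*} [PseudoMetricSpace Z] (z : Z) (S : ℕ → Set Z)
    (h : ∀ δ > 0, ∀ᶠ n in atTop, ∃ q ∈ S n, dist q z ≤ δ) :
    ∃ q : ℕ → Z, Tendsto q atTop (𝓝 z) ∧ ∀ᶠ n in atTop, q n ∈ S n := by
  classical
  have H : ∀ n, ∃ q : Z, (S n).Nonempty → q ∈ S n ∧
      dist z q < infDist z (S n) + 1 / ((n : ℝ) + 1) := by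
    intro n
    by_cases hS : (S n).Nonempty
    · obtain ⟨q, hq, hd⟩ := (infDist_lt_iff hS (x := z)
        (r := infDist z (S n) + 1 / ((n : ℝ) + 1))).1 (by
          have : 0 < 1 / ((n : ℝ) + 1) := by positivity
          linarith)
      exact ⟨q, fun _ => ⟨hq, hd⟩⟩
    · exact ⟨z, fun h => absurd h hS⟩
  choose q hq using H
  refine ⟨q, ?_, ?_⟩
  · rw [Metric.tendsto_nhds]
    intro ε hε
    have h1 := (tendsto_one_div_add_atTop_nhds_zero_nat (𝕜 := ℝ)).eventually
      (gt_mem_nhds (half_pos hε))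
    filter_upwards [h (ε / 2) (by positivity), h1] with n ⟨p, hp, hpd⟩ hn
    have h2 := (hq n ⟨p, hp⟩).2
    have h3 := infDist_le_dist_of_mem (x := z) hp
    rw [dist_comm z p] at h3
    rw [dist_comm]
    linarith
  · filter_upwards [h 1 one_pos] with n ⟨p, hp, _⟩
    exact (hq n ⟨p, hp⟩).1

lemma bdd_of_eventually {a : ℕ → ℝ} {m : ℝ} (ha : ∀ᶠ n in atTop, |a n| ≤ m) :
    IsBoundedUnder (· ≤ ·) atTop a ∧ IsBoundedUnder (· ≥ ·) atTop a :=
  ⟨⟨m, by rw [eventually_map]; filter_upwards [ha] with n hn using (abs_le.1 hn).2⟩,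
   ⟨-m, by rw [eventually_map]; filter_upwards [ha] with n hn using (abs_le.1 hn).1⟩⟩

lemma lim_compare {a b c : ℕ → ℝ} {m m' : ℝ} (ha : ∀ᶠ n in atTop, |a n| ≤ m)
    (hb : ∀ᶠ n in atTop, |b n| ≤ m') (hc : Tendsto c atTop (𝓝 0))
    (h : ∀ᶠ n in atTop, a n ≤ b n + c n) :
    liminf a atTop ≤ liminf b atTop ∧ limsup a atTop ≤ limsup b atTop := by
  obtain ⟨ha1, ha2⟩ := bdd_of_eventually ha
  obtain ⟨hb1, hb2⟩ := bdd_of_eventually hb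
  constructor
  · refine le_of_forall_lt_imp_le_of_dense ?_
    intro x hx
    obtain ⟨y, hxy, hy⟩ := exists_between hx
    have h1 := eventually_lt_of_lt_liminf hy ha2
    refine le_liminf_of_le hb1.isCoboundedUnder_ge ?_
    filter_upwards [h1, h, hc.eventually (gt_mem_nhds (sub_pos.2 hxy))] with n h1 h2 h3
    linarith
  · refine le_of_forall_gt_imp_ge_of_dense ?_
    intro x hx
    obtain ⟨y, hy, hxy⟩ := exists_between hx
    have h1 := eventually_lt_of_limsup_lt hy hb1
    refine limsup_le_of_le ha2.isCoboundedUnder_le ?_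
    filter_upwards [h1, h, hc.eventually (gt_mem_nhds (sub_pos.2 hxy))] with n h1 h2 h3
    linarith

section vals
variable {N M k : ℕ} {A : Set (Euc k)} {f : Euc N → Euc M → Euc k → Euc N}
  {g : Euc N → Euc M → Euc k → Euc M} {L Q : ℝ}

lemma trajOn_of_isTrajectory {ε : ℝ} {α : ℝ → Euc k} {ξ : ℝ → Euc N} {η : ℝ → Euc M}
    (hα : IsControl A α) (h : IsTrajectory f g ε α ξ η) {T : ℝ} (hT : 0 ≤ T) :
    TrajOn (Fe f g ε) A T α (fun s => (ξ s, η s)) := by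
  obtain ⟨h1, h2, h3, h4⟩ := h
  have hI : ∀ t, 0 ≤ t → IntervalIntegrable
      (fun s => Fe f g ε (ξ s, η s) (α s)) volume 0 t := by
    intro t ht
    have a1 := (h1 t ht).smul ε
    have a2 := h2 t ht
    rw [intervalIntegrable_iff] at a1 a2 ⊢
    exact a1.prodMk a2
  refine ⟨hα.1, hα.2, hI T hT, fun t ht => ?_⟩
  have e1 := (ContinuousLinearMap.fst ℝ (Euc N) (Euc M)).intervalIntegral_comp_comm (hI t ht.1)
  have e2 := (ContinuousLinearMap.snd ℝ (Euc N) (Euc M)).intervalIntegral_comp_comm (hI t ht.1)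
  simp only [Fe, ContinuousLinearMap.coe_fst', ContinuousLinearMap.coe_snd',
    intervalIntegral.integral_smul] at e1 e2
  apply Prod.ext
  · simp only [Prod.fst_add, Fe]
    rw [← e1]; exact h3 t ht.1
  · simp only [Prod.snd_add, Fe]
    rw [← e2]; exact h4 t ht.1

lemma isTrajectory_of_trajOn {ε : ℝ} (hε : 0 < ε) {α : ℝ → Euc k} {q : ℝ → Euc N × Euc M}
    (h : ∀ T, 0 ≤ T → TrajOn (Fe f g ε) A T α q) :
    IsControl A α ∧ IsTrajectory f g ε α (fun s => (q s).1) (fun s => (q s).2) := by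
  have hI := fun t ht => (h t ht).int
  have hI1 : ∀ t, 0 ≤ t → IntervalIntegrable
      (fun s => ε • f (q s).1 (q s).2 (α s)) volume 0 t := by
    intro t ht
    have := hI t ht
    rw [intervalIntegrable_iff] at this ⊢
    exact this.fst
  have hI2 : ∀ t, 0 ≤ t → IntervalIntegrable
      (fun s => g (q s).1 (q s).2 (α s)) volume 0 t := by
    intro t ht
    have := hI t ht
    rw [intervalIntegrable_iff] at this ⊢
    exact this.snd
  refine ⟨⟨(h 0 le_rfl).meas, (h 0 le_rfl).mem⟩, ?_, hI2, ?_, ?_⟩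
  · intro t ht
    have := (hI1 t ht).smul ε⁻¹
    refine this.congr_ae (ae_of_all _ fun s => ?_)
    simp [smul_smul, inv_mul_cancel₀ hε.ne']
  · intro t ht
    have e1 := (ContinuousLinearMap.fst ℝ (Euc N) (Euc M)).intervalIntegral_comp_comm (hI t ht)
    simp only [Fe, ContinuousLinearMap.coe_fst', intervalIntegral.integral_smul] at e1
    rw [e1]
    have := congrArg Prod.fst ((h t ht).eqn t ⟨ht, le_rfl⟩)
    exact this
  · intro t ht
    have e1 := (ContinuousLinearMap.snd ℝ (Euc N) (Euc M)).intervalIntegral_comp_comm (hI t ht)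
    simp only [Fe, ContinuousLinearMap.coe_snd'] at e1
    rw [e1]
    have := congrArg Prod.snd ((h t ht).eqn t ⟨ht, le_rfl⟩)
    exact this

variable {ℓ : Euc N → Euc M → Euc k → ℝ} {u0 : Euc N → Euc M → ℝ}

lemma cost_integrable (hA : IsCompact A)
    (hlCont : Continuous fun z : Euc N × Euc M × Euc k => ℓ z.1 z.2.1 z.2.2)
    {ε T : ℝ} (hT : 0 ≤ T) {α : ℝ → Euc k} {q : ℝ → Euc N × Euc M}
    (h : TrajOn (Fe f g ε) A T α q) :
    IntervalIntegrable (fun s => ℓ (q s).1 (q s).2 (α s)) volume 0 T := by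
  have hqc := h.continuousOn hT
  have hcont : Continuous fun z : (Euc N × Euc M) × Euc k => ℓ z.1.1 z.1.2 z.2 :=
    hlCont.comp ((continuous_fst.comp continuous_fst).prodMk
      ((continuous_snd.comp continuous_fst).prodMk continuous_snd))
  obtain ⟨C, hC⟩ := ((isCompact_Icc.image_of_continuousOn hqc).prod hA).exists_bound_of_continuousOn
    hcont.continuousOn
  rw [intervalIntegrable_iff, uIoc_of_le hT]
  refine Integrable.of_bound (μ := volume.restrict (Ioc 0 T)) ?_ C ?_
  · have m1 : AEStronglyMeasurable q (volume.restrict (Ioc 0 T)) :=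
      (hqc.mono Ioc_subset_Icc_self).aestronglyMeasurable measurableSet_Ioc
    have m2 : AEStronglyMeasurable α (volume.restrict (Ioc 0 T)) :=
      h.meas.aestronglyMeasurable
    exact hcont.comp_aestronglyMeasurable (m1.prodMk m2)
  · filter_upwards [ae_restrict_mem measurableSet_Ioc] with s hs
    exact hC (q s, α s) ⟨⟨s, ⟨hs.1.le, hs.2⟩, rfl⟩, h.mem s⟩

/-- The set whose infimum is the value function. -/
def valSet (A : Set (Euc k)) (f : Euc N → Euc M → Euc k → Euc N) (g : Euc N → Euc M → Euc k → Euc M)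
    (ℓ : Euc N → Euc M → Euc k → ℝ) (u0 : Euc N → Euc M → ℝ)
    (ε : ℝ) (x : Euc N) (y : Euc M) (t : ℝ) : Set ℝ :=
  { v : ℝ | ∃ (α : ℝ → Euc k) (ξ : ℝ → Euc N) (η : ℝ → Euc M),
    IsControl A α ∧ IsTrajectory f g ε α ξ η ∧ ξ 0 = x ∧ η 0 = y ∧
    IntervalIntegrable (fun s => ℓ (ξ s) (η s) (α s)) volume 0 (t / ε) ∧
    v = ε * (∫ s in (0:ℝ)..(t / ε), ℓ (ξ s) (η s) (α s)) + u0 (ξ (t / ε)) (η (t / ε)) }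

lemma mem_valSet (hA : IsCompact A)
    (hlCont : Continuous fun z : Euc N × Euc M × Euc k => ℓ z.1 z.2.1 z.2.2)
    {ε t : ℝ} (hε : 0 < ε) (ht : 0 ≤ t) {α : ℝ → Euc k} {q : ℝ → Euc N × Euc M}
    (h : ∀ T, 0 ≤ T → TrajOn (Fe f g ε) A T α q) :
    ε * (∫ s in (0:ℝ)..(t / ε), ℓ (q s).1 (q s).2 (α s)) + u0 (q (t / ε)).1 (q (t / ε)).2 ∈
      valSet A f g ℓ u0 ε (q 0).1 (q 0).2 t := by
  have h1 := isTrajectory_of_trajOn hε h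
  have ht' : 0 ≤ t / ε := by positivity
  exact ⟨α, _, _, h1.1, h1.2, rfl, rfl, cost_integrable hA hlCont ht' (h _ ht'), rfl⟩

lemma valSet_traj {ε : ℝ} {x : Euc N} {y : Euc M} {t v : ℝ}
    (hv : v ∈ valSet A f g ℓ u0 ε x y t) :
    ∃ (α : ℝ → Euc k) (q : ℝ → Euc N × Euc M), (∀ T, 0 ≤ T → TrajOn (Fe f g ε) A T α q) ∧
      q 0 = (x, y) ∧
      v = ε * (∫ s in (0:ℝ)..(t / ε), ℓ (q s).1 (q s).2 (α s)) + u0 (q (t / ε)).1 (q (t / ε)).2 := by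
  obtain ⟨α, ξ, η, hα, ht, hx, hy, _, hv⟩ := hv
  exact ⟨α, fun s => (ξ s, η s), fun T hT => trajOn_of_isTrajectory hα ht hT,
    by simp [hx, hy], hv⟩

lemma l_lower (hA : IsCompact A)
    (hlCont : Continuous fun z : Euc N × Euc M × Euc k => ℓ z.1 z.2.1 z.2.2)
    (hlCoer : ∀ B : Set (Euc N), IsCompact B → ∀ c : ℝ, ∃ R : ℝ,
      ∀ y : Euc M, R < ‖y‖ → ∀ x ∈ B, ∀ a ∈ A, c < ℓ x y a) {B : Set (Euc N)} (hB : IsCompact B) :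
    ∃ C ≥ 0, ∀ x ∈ B, ∀ y, ∀ a ∈ A, -C ≤ ℓ x y a := by
  obtain ⟨R, hR⟩ := hlCoer B hB 0
  obtain ⟨C, hC⟩ := (hB.prod ((isCompact_closedBall (0 : Euc M) R).prod hA)).exists_bound_of_continuousOn
    hlCont.continuousOn
  refine ⟨max C 0, le_max_right _ _, fun x hx y a ha => ?_⟩
  rcases le_or_gt ‖y‖ R with h | h
  · have := hC (x, y, a) ⟨hx, by simpa using h, ha⟩
    rw [Real.norm_eq_abs] at this
    have h2 := (abs_le.1 this).1
    simp only at h2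
    linarith [le_max_left C 0]
  · have := hR y h x hx a ha
    linarith [le_max_right C 0]

lemma val_lower (hS : SysHyp A f g L Q) (hA : IsCompact A)
    (hlCont : Continuous fun z : Euc N × Euc M × Euc k => ℓ z.1 z.2.1 z.2.2)
    (hlCoer : ∀ B : Set (Euc N), IsCompact B → ∀ c : ℝ, ∃ R : ℝ,
      ∀ y : Euc M, R < ‖y‖ → ∀ x ∈ B, ∀ a ∈ A, c < ℓ x y a)
    (hu0Bdd : ∀ x y, -Q ≤ u0 x y) (x0 : Euc N) (t1 : ℝ) :
    ∃ m : ℝ, ∀ ε, 0 < ε → ∀ x, ‖x - x0‖ ≤ 1 → ∀ y t, 0 ≤ t → t ≤ t1 →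
      ∀ v ∈ valSet A f g ℓ u0 ε x y t, -m ≤ v := by
  obtain ⟨C, hC0, hC⟩ := l_lower hA hlCont hlCoer (isCompact_closedBall x0 (1 + Q * t1))
  refine ⟨C * t1 + Q, ?_⟩
  intro ε hε x hx y t ht ht1 v hv
  obtain ⟨α, q, hq, hq0, rfl⟩ := valSet_traj hv
  have hT : 0 ≤ t / ε := by positivity
  have hi := cost_integrable hA hlCont hT (hq _ hT)
  have h1 : ∫ s in (0:ℝ)..(t / ε), (-C) ≤ ∫ s in (0:ℝ)..(t / ε), ℓ (q s).1 (q s).2 (α s) := by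
    refine intervalIntegral.integral_mono_on hT (by simp) hi ?_
    intro s hs
    refine hC _ ?_ _ _ ((hq _ hT).mem s)
    have h2 := hS.fst_bound hε (hq _ hT) s hs
    rw [hq0] at h2
    rw [mem_closedBall, dist_eq_norm]
    have h3 := norm_add_le ((q s).1 - x) (x - x0)
    rw [sub_add_sub_cancel] at h3
    have h4 : ε * Q * s ≤ Q * t1 := by
      have h5 : s * ε ≤ t := (le_div_iff₀ hε).1 hs.2
      have := mul_le_mul_of_nonneg_left (h5.trans ht1) hS.hQ
      linarith
    linarith
  rw [intervalIntegral.integral_const, sub_zero, smul_eq_mul] at h1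
  have h2 := mul_le_mul_of_nonneg_left h1 hε.le
  have h3 : ε * (t / ε * -C) = - (C * t) := by field_simp
  rw [h3] at h2
  have h4 := mul_le_mul_of_nonneg_left ht1 hC0
  linarith [hu0Bdd (q (t / ε)).1 (q (t / ε)).2]

lemma cost_upper {ε T C : ℝ} (hA : IsCompact A)
    (hlCont : Continuous fun z : Euc N × Euc M × Euc k => ℓ z.1 z.2.1 z.2.2)
    (hT : 0 ≤ T) {α : ℝ → Euc k} {q : ℝ → Euc N × Euc M}
    (h : TrajOn (Fe f g ε) A T α q) {S : Set (Euc N × Euc M)}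
    (hS : ∀ s ∈ Icc 0 T, q s ∈ S) (hC : ∀ z ∈ S, ∀ a ∈ A, ℓ z.1 z.2 a ≤ C) :
    ∫ s in (0:ℝ)..T, ℓ (q s).1 (q s).2 (α s) ≤ T * C := by
  have := intervalIntegral.integral_mono_on hT (cost_integrable hA hlCont hT h)
    (g := fun _ => C) (by simp) (fun s hs => hC _ (hS s hs) _ (h.mem s))
  rwa [intervalIntegral.integral_const, sub_zero, smul_eq_mul] at this

lemma l_upper (hA : IsCompact A)
    (hlCont : Continuous fun z : Euc N × Euc M × Euc k => ℓ z.1 z.2.1 z.2.2)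
    (c : Euc N × Euc M) (R : ℝ) :
    ∃ C ≥ 0, ∀ z ∈ closedBall c R, ∀ a ∈ A, ℓ z.1 z.2 a ≤ C := by
  have hcont : Continuous fun z : (Euc N × Euc M) × Euc k => ℓ z.1.1 z.1.2 z.2 :=
    hlCont.comp ((continuous_fst.comp continuous_fst).prodMk
      ((continuous_snd.comp continuous_fst).prodMk continuous_snd))
  obtain ⟨C, hC⟩ := ((isCompact_closedBall c R).prod hA).exists_bound_of_continuousOn
    hcont.continuousOn
  refine ⟨max C 0, le_max_right _ _, fun z hz a ha => ?_⟩
  have := hC (z, a) ⟨hz, ha⟩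
  exact ((le_abs_self _).trans this).trans (le_max_left _ _)

lemma val_upper (hS : SysHyp A f g L Q) (hA : IsCompact A)
    (hlCont : Continuous fun z : Euc N × Euc M × Euc k => ℓ z.1 z.2.1 z.2.2)
    (hu0Cont : Continuous fun z : Euc N × Euc M => u0 z.1 z.2)
    (x0 : Euc N) (y0 : Euc M) {t1 : ℝ} (ht1 : 0 ≤ t1) :
    ∃ m : ℝ, ∀ ε, 0 < ε → ε ≤ 1 → ∀ x, ‖x - x0‖ ≤ 1 → ∀ y, ‖y - y0‖ ≤ 1 → ∀ t, 0 ≤ t → t ≤ t1 →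
      ∃ v ∈ valSet A f g ℓ u0 ε x y t, v ≤ m := by
  obtain ⟨R, hR⟩ := hS.bounded_ctrl x0 y0 ht1
  obtain ⟨C, hC0, hC⟩ := l_upper (ℓ := ℓ) hA hlCont (x0, y0) R
  obtain ⟨C', hC'⟩ := (isCompact_closedBall (x0, y0) R).exists_bound_of_continuousOn
    hu0Cont.continuousOn
  refine ⟨t1 * C + C', ?_⟩
  intro ε hε hε1 x hx y hy t ht htt
  have hT : 0 ≤ t / ε := by positivity
  obtain ⟨α, q, hq0, hq, hqR⟩ := hR ε hε hε1 (x, y) hx hy (t / ε) hT (by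
    rw [mul_div_cancel₀ _ hε.ne']; exact htt)
  have hm := mem_valSet (u0 := u0) hA hlCont hε ht hq
  rw [hq0] at hm
  refine ⟨_, hm, ?_⟩
  have h1 := mul_le_mul_of_nonneg_left (cost_upper hA hlCont hT (hq _ hT) hqR hC) hε.le
  have h2 : ε * (t / ε * C) = t * C := by field_simp
  rw [h2] at h1
  have h3 := (le_abs_self _).trans (hC' _ (hqR _ ⟨hT, le_rfl⟩))
  have h4 := mul_le_mul_of_nonneg_right htt hC0
  linarith

lemma dpp (hS : SysHyp A f g L Q) (hA : IsCompact A)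
    (hlCont : Continuous fun z : Euc N × Euc M × Euc k => ℓ z.1 z.2.1 z.2.2)
    (hlCoer : ∀ B : Set (Euc N), IsCompact B → ∀ c : ℝ, ∃ R : ℝ,
      ∀ y : Euc M, R < ‖y‖ → ∀ x ∈ B, ∀ a ∈ A, c < ℓ x y a)
    (hu0Cont : Continuous fun z : Euc N × Euc M => u0 z.1 z.2)
    (hu0Bdd : ∀ x y, -Q ≤ u0 x y) {ε T t C : ℝ} (hε : 0 < ε) (hε1 : ε ≤ 1) (hT : 0 ≤ T)
    (ht : 0 ≤ t) {α : ℝ → Euc k} {q : ℝ → Euc N × Euc M}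
    (h : TrajOn (Fe f g ε) A T α q) {S : Set (Euc N × Euc M)}
    (hqS : ∀ s ∈ Icc 0 T, q s ∈ S) (hC : ∀ z ∈ S, ∀ a ∈ A, ℓ z.1 z.2 a ≤ C) :
    valueFun A f g ℓ u0 ε (q 0).1 (q 0).2 (t + ε * T) ≤
      valueFun A f g ℓ u0 ε (q T).1 (q T).2 t + ε * (T * C) := by
  obtain ⟨m, hm⟩ := val_lower hS hA hlCont hlCoer hu0Bdd (q 0).1 (t + ε * T)
  obtain ⟨m', hm'⟩ := val_upper hS hA hlCont hu0Cont (q T).1 (q T).2 ht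
  have hne : (valSet A f g ℓ u0 ε (q T).1 (q T).2 t).Nonempty := by
    obtain ⟨v, hv, _⟩ := hm' ε hε hε1 (q T).1 (by simp) (q T).2 (by simp) t ht le_rfl
    exact ⟨v, hv⟩
  have hbd : BddBelow (valSet A f g ℓ u0 ε (q 0).1 (q 0).2 (t + ε * T)) :=
    ⟨-m, fun v hv => hm ε hε (q 0).1 (by simp) (q 0).2 (t + ε * T) (by positivity) le_rfl v hv⟩
  rw [← sub_le_iff_le_add]
  refine le_csInf hne ?_
  intro v hv
  obtain ⟨β, p, hp, hp0, rfl⟩ := valSet_traj hv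
  have hj : p 0 = q T := hp0
  have hcat : ∀ T', 0 ≤ T' → TrajOn (Fe f g ε) A T' (catAt T α β) (catAt T q p) := fun T' hT' =>
    (h.concat hT hT' (hp T' hT') hj).mono hT' (by linarith)
  have hmem := mem_valSet (u0 := u0) hA hlCont hε (t := t + ε * T) (by positivity) hcat
  rw [catAt_le hj hT] at hmem
  have hle := csInf_le hbd hmem
  have hdiv : (t + ε * T) / ε = T + t / ε := by field_simp; ring
  have htε : 0 ≤ t / ε := by positivity
  have e : (fun s => ℓ (catAt T q p s).1 (catAt T q p s).2 (catAt T α β s)) =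
      catAt T (fun s => ℓ (q s).1 (q s).2 (α s)) (fun s => ℓ (p s).1 (p s).2 (β s)) := by
    funext s; unfold catAt; split_ifs <;> rfl
  rw [hdiv, e, catAt_integral hT htε (cost_integrable hA hlCont hT h)
    (cost_integrable hA hlCont htε (hp _ htε)), catAt_ge (by linarith), add_sub_cancel_left,
    mul_add] at hle
  have h1 := mul_le_mul_of_nonneg_left (cost_upper hA hlCont hT h hqS hC) hε.le
  have h2 : valueFun A f g ℓ u0 ε (q 0).1 (q 0).2 (t + ε * T) =
    sInf (valSet A f g ℓ u0 ε (q 0).1 (q 0).2 (t + ε * T)) := rfl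
  rw [h2]
  linarith

end vals
end

noncomputable section
section fin
variable {N M k : ℕ} {A : Set (Euc k)} {f : Euc N → Euc M → Euc k → Euc N}
  {g : Euc N → Euc M → Euc k → Euc M} {L Q : ℝ}
  {ℓ : Euc N → Euc M → Euc k → ℝ} {u0 : Euc N → Euc M → ℝ}

lemma steer_seq (hS : SysHyp A f g L Q) (x0 : Euc N) (y0 z0 : Euc M) :
    ∃ T > 0, ∃ R : ℝ, ∀ (e : ℕ → ℝ) (p : ℕ → Euc N × Euc M), (∀ n, 0 < e n) →
      Tendsto e atTop (𝓝 0) → Tendsto p atTop (𝓝 (x0, y0)) →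
      ∃ q : ℕ → Euc N × Euc M, Tendsto q atTop (𝓝 (x0, z0)) ∧ ∀ᶠ n in atTop,
        ∃ (α : ℝ → Euc k) (c : ℝ → Euc N × Euc M), c 0 = p n ∧
          TrajOn (Fe f g (e n)) A T α c ∧ (∀ s ∈ Icc 0 T, c s ∈ closedBall (x0, y0) R) ∧
          c T = q n := by
  obtain ⟨T, hT, R, H⟩ := hS.steer x0 y0 z0
  refine ⟨T, hT, R, fun e p he he0 hp => ?_⟩
  refine seq_select (x0, z0) (fun n => {q | ∃ (α : ℝ → Euc k) (c : ℝ → Euc N × Euc M), c 0 = p n ∧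
          TrajOn (Fe f g (e n)) A T α c ∧ (∀ s ∈ Icc 0 T, c s ∈ closedBall (x0, y0) R) ∧
          c T = q}) ?_
  intro δ hδ
  obtain ⟨ρ, hρ, ε₀, hε₀, H'⟩ := H δ hδ
  filter_upwards [he0.eventually_lt_const hε₀, hp.eventually (closedBall_mem_nhds _ hρ)] with n h1 h2
  obtain ⟨α, c, hc0, hc, hcb, hcT⟩ := H' (e n) (he n) h1.le (p n)
    (by rw [← dist_eq_norm]; exact h2)
  exact ⟨c T, ⟨α, c, hc0, hc, hcb, rfl⟩, by rw [dist_eq_norm]; exact hcT⟩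

lemma val_bdd (hS : SysHyp A f g L Q) (hA : IsCompact A)
    (hlCont : Continuous fun z : Euc N × Euc M × Euc k => ℓ z.1 z.2.1 z.2.2)
    (hlCoer : ∀ B : Set (Euc N), IsCompact B → ∀ c : ℝ, ∃ R : ℝ,
      ∀ y : Euc M, R < ‖y‖ → ∀ x ∈ B, ∀ a ∈ A, c < ℓ x y a)
    (hu0Cont : Continuous fun z : Euc N × Euc M => u0 z.1 z.2)
    (hu0Bdd : ∀ x y, -Q ≤ u0 x y) (x0 : Euc N) (y0 : Euc M) {t0 : ℝ} (ht0 : 0 < t0) :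
    ∃ m : ℝ, ∀ (e : ℕ → ℝ) (w : ℕ → Euc N × Euc M × ℝ), (∀ n, 0 < e n) →
      Tendsto e atTop (𝓝 0) → Tendsto w atTop (𝓝 (x0, y0, t0)) →
      ∀ᶠ n in atTop, |valueFun A f g ℓ u0 (e n) (w n).1 (w n).2.1 (w n).2.2| ≤ m := by
  obtain ⟨m, hm⟩ := val_lower hS hA hlCont hlCoer hu0Bdd x0 (t0 + 1)
  obtain ⟨m', hm'⟩ := val_upper hS hA hlCont hu0Cont x0 y0 (t1 := t0 + 1) (by linarith)
  refine ⟨max m m', fun e w he he0 hw => ?_⟩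
  have h1 := (continuous_fst.tendsto _).comp hw
  have h2 := ((continuous_fst.comp continuous_snd).tendsto _).comp hw
  have h3 := ((continuous_snd.comp continuous_snd).tendsto _).comp hw
  filter_upwards [he0.eventually_lt_const one_pos, h1.eventually (closedBall_mem_nhds _ one_pos),
    h2.eventually (closedBall_mem_nhds _ one_pos), h3.eventually_const_lt ht0,
    h3.eventually_lt_const (u := t0 + 1) (by simp)] with n a1 a2 a3 a4 a5
  simp only [Function.comp, mem_closedBall, dist_eq_norm] at a2 a3 a4 a5
  obtain ⟨v, hv, hvm⟩ := hm' (e n) (he n) a1.le _ a2 _ a3 _ a4.le a5.le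
  have hlow := hm (e n) (he n) _ a2 (w n).2.1 _ a4.le a5.le
  have e1 : valueFun A f g ℓ u0 (e n) (w n).1 (w n).2.1 (w n).2.2 =
    sInf (valSet A f g ℓ u0 (e n) (w n).1 (w n).2.1 (w n).2.2) := rfl
  rw [e1, abs_le]
  have b1 := le_csInf ⟨v, hv⟩ hlow
  have b2 := csInf_le ⟨-m, hlow⟩ hv
  exact ⟨by linarith [le_max_left m m'], by linarith [le_max_right m m']⟩

lemma transfer_fwd (hS : SysHyp A f g L Q) (hA : IsCompact A)
    (hlCont : Continuous fun z : Euc N × Euc M × Euc k => ℓ z.1 z.2.1 z.2.2)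
    (hlCoer : ∀ B : Set (Euc N), IsCompact B → ∀ c : ℝ, ∃ R : ℝ,
      ∀ y : Euc M, R < ‖y‖ → ∀ x ∈ B, ∀ a ∈ A, c < ℓ x y a)
    (hu0Cont : Continuous fun z : Euc N × Euc M => u0 z.1 z.2)
    (hu0Bdd : ∀ x y, -Q ≤ u0 x y) (x0 : Euc N) (y0 z0 : Euc M) {t0 : ℝ} (ht0 : 0 < t0)
    (e : ℕ → ℝ) (w : ℕ → Euc N × Euc M × ℝ) (he : ∀ n, 0 < e n)
    (he0 : Tendsto e atTop (𝓝 0)) (hw : Tendsto w atTop (𝓝 (x0, y0, t0))) :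
    ∃ w' : ℕ → Euc N × Euc M × ℝ, Tendsto w' atTop (𝓝 (x0, z0, t0)) ∧
      limsup (fun n => valueFun A f g ℓ u0 (e n) (w n).1 (w n).2.1 (w n).2.2) atTop ≤
      limsup (fun n => valueFun A f g ℓ u0 (e n) (w' n).1 (w' n).2.1 (w' n).2.2) atTop := by
  obtain ⟨T, hT, R, H⟩ := steer_seq hS x0 y0 z0
  have h1 := (continuous_fst.tendsto _).comp hw
  have h2 := ((continuous_fst.comp continuous_snd).tendsto _).comp hw
  have h3 := ((continuous_snd.comp continuous_snd).tendsto _).comp hw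
  obtain ⟨q, hq, hqe⟩ := H e (fun n => ((w n).1, (w n).2.1)) he he0 (h1.prodMk_nhds h2)
  obtain ⟨C, hC0, hC⟩ := l_upper (ℓ := ℓ) hA hlCont (x0, y0) R
  have h4 : Tendsto (fun n => (w n).2.2 - e n * T) atTop (𝓝 t0) := by
    have := h3.sub (he0.mul_const T)
    simpa using this
  have hw' : Tendsto (fun n => ((q n).1, (q n).2, (w n).2.2 - e n * T)) atTop (𝓝 (x0, z0, t0)) :=
    ((continuous_fst.tendsto _).comp hq).prodMk_nhds
      (((continuous_snd.tendsto _).comp hq).prodMk_nhds h4)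
  refine ⟨_, hw', ?_⟩
  obtain ⟨m, hm⟩ := val_bdd hS hA hlCont hlCoer hu0Cont hu0Bdd x0 y0 ht0
  obtain ⟨m', hm'⟩ := val_bdd hS hA hlCont hlCoer hu0Cont hu0Bdd x0 z0 ht0
  refine (lim_compare (c := fun n => e n * (T * C)) (hm e w he he0 hw) (hm' e _ he he0 hw')
    (by simpa using he0.mul_const (T * C)) ?_).2
  filter_upwards [hqe, he0.eventually_lt_const one_pos, h4.eventually_const_lt ht0] with n a1 a2 a3
  obtain ⟨α, c, hc0, hc, hcb, hcT⟩ := a1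
  have := dpp hS hA hlCont hlCoer hu0Cont hu0Bdd (he n) a2.le hT.le a3.le hc hcb hC
  rw [hc0, hcT, sub_add_cancel] at this
  exact this

lemma transfer_bwd (hS : SysHyp A f g L Q) (hA : IsCompact A)
    (hlCont : Continuous fun z : Euc N × Euc M × Euc k => ℓ z.1 z.2.1 z.2.2)
    (hlCoer : ∀ B : Set (Euc N), IsCompact B → ∀ c : ℝ, ∃ R : ℝ,
      ∀ y : Euc M, R < ‖y‖ → ∀ x ∈ B, ∀ a ∈ A, c < ℓ x y a)
    (hu0Cont : Continuous fun z : Euc N × Euc M => u0 z.1 z.2)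
    (hu0Bdd : ∀ x y, -Q ≤ u0 x y) (x0 : Euc N) (y0 z0 : Euc M) {t0 : ℝ} (ht0 : 0 < t0)
    (e : ℕ → ℝ) (w : ℕ → Euc N × Euc M × ℝ) (he : ∀ n, 0 < e n)
    (he0 : Tendsto e atTop (𝓝 0)) (hw : Tendsto w atTop (𝓝 (x0, z0, t0))) :
    ∃ w' : ℕ → Euc N × Euc M × ℝ, Tendsto w' atTop (𝓝 (x0, y0, t0)) ∧
      liminf (fun n => valueFun A f g ℓ u0 (e n) (w' n).1 (w' n).2.1 (w' n).2.2) atTop ≤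
      liminf (fun n => valueFun A f g ℓ u0 (e n) (w n).1 (w n).2.1 (w n).2.2) atTop := by
  obtain ⟨T, hT, R, H⟩ := steer_seq hS.neg x0 z0 y0
  have h1 := (continuous_fst.tendsto _).comp hw
  have h2 := ((continuous_fst.comp continuous_snd).tendsto _).comp hw
  have h3 := ((continuous_snd.comp continuous_snd).tendsto _).comp hw
  obtain ⟨q, hq, hqe⟩ := H e (fun n => ((w n).1, (w n).2.1)) he he0 (h1.prodMk_nhds h2)
  obtain ⟨C, hC0, hC⟩ := l_upper (ℓ := ℓ) hA hlCont (x0, z0) R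
  have h4 : Tendsto (fun n => (w n).2.2 + e n * T) atTop (𝓝 t0) := by
    have := h3.add (he0.mul_const T)
    simpa using this
  have hw' : Tendsto (fun n => ((q n).1, (q n).2, (w n).2.2 + e n * T)) atTop (𝓝 (x0, y0, t0)) :=
    ((continuous_fst.tendsto _).comp hq).prodMk_nhds
      (((continuous_snd.tendsto _).comp hq).prodMk_nhds h4)
  refine ⟨_, hw', ?_⟩
  obtain ⟨m, hm⟩ := val_bdd hS hA hlCont hlCoer hu0Cont hu0Bdd x0 z0 ht0
  obtain ⟨m', hm'⟩ := val_bdd hS hA hlCont hlCoer hu0Cont hu0Bdd x0 y0 ht0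
  refine (lim_compare (c := fun n => e n * (T * C)) (hm' e _ he he0 hw') (hm e w he he0 hw)
    (by simpa using he0.mul_const (T * C)) ?_).1
  filter_upwards [hqe, he0.eventually_lt_const one_pos, h3.eventually_const_lt ht0] with n a1 a2 a3
  obtain ⟨α, c, hc0, hc, hcb, hcT⟩ := a1
  have hrev := hc.reverse hT.le
  have hF : (fun (q : Euc N × Euc M) a => - Fe (fun x y a => - f x y a) (fun x y a => - g x y a)
      (e n) q a) = Fe f g (e n) := by
    funext q a
    simp [Fe]
  rw [hF] at hrev
  have := dpp hS hA hlCont hlCoer hu0Cont hu0Bdd (he n) a2.le hT.le a3.le hrev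
    (S := closedBall (x0, z0) R)
    (fun s hs => hcb _ ⟨by linarith [hs.2], by linarith [hs.1]⟩) hC
  simp only [sub_zero, sub_self, hc0, hcT] at this
  exact this

lemma seq_exists {Z : Type*} [TopologicalSpace Z] (z : Z) : ∃ (e : ℕ → ℝ) (w : ℕ → Z),
    (∀ n, 0 < e n) ∧ Tendsto e atTop (𝓝 0) ∧ Tendsto w atTop (𝓝 z) :=
  ⟨fun n => 1 / ((n : ℝ) + 1), fun _ => z, fun n => by positivity,
    tendsto_one_div_add_atTop_nhds_zero_nat, tendsto_const_nhds⟩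

lemma upper_le (hS : SysHyp A f g L Q) (hA : IsCompact A)
    (hlCont : Continuous fun z : Euc N × Euc M × Euc k => ℓ z.1 z.2.1 z.2.2)
    (hlCoer : ∀ B : Set (Euc N), IsCompact B → ∀ c : ℝ, ∃ R : ℝ,
      ∀ y : Euc M, R < ‖y‖ → ∀ x ∈ B, ∀ a ∈ A, c < ℓ x y a)
    (hu0Cont : Continuous fun z : Euc N × Euc M => u0 z.1 z.2)
    (hu0Bdd : ∀ x y, -Q ≤ u0 x y) (x0 : Euc N) (y0 z0 : Euc M) {t0 : ℝ} (ht0 : 0 < t0) :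
      upperLim (fun ε (z : Euc N × Euc M × ℝ) => valueFun A f g ℓ u0 ε z.1 z.2.1 z.2.2)
        (x0, y0, t0) ≤
      upperLim (fun ε (z : Euc N × Euc M × ℝ) => valueFun A f g ℓ u0 ε z.1 z.2.1 z.2.2)
        (x0, z0, t0) := by
  obtain ⟨m, hm⟩ := val_bdd hS hA hlCont hlCoer hu0Cont hu0Bdd x0 z0 ht0
  unfold upperLim
  refine csSup_le ?_ ?_
  · obtain ⟨e, w, h1, h2, h3⟩ := seq_exists (x0, y0, t0)
    exact ⟨_, e, w, h1, h2, h3, rfl⟩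
  · rintro l ⟨e, w, h1, h2, h3, rfl⟩
    obtain ⟨w', hw', hle⟩ := transfer_fwd hS hA hlCont hlCoer hu0Cont hu0Bdd x0 y0 z0 ht0 e w h1 h2 h3
    refine hle.trans (le_csSup ⟨m, ?_⟩ ⟨e, w', h1, h2, hw', rfl⟩)
    rintro l ⟨e, w, h1, h2, h3, rfl⟩
    have hb := hm e w h1 h2 h3
    refine limsup_le_of_le (bdd_of_eventually hb).2.isCoboundedUnder_le ?_
    filter_upwards [hb] with n hn using (abs_le.1 hn).2

lemma lower_le (hS : SysHyp A f g L Q) (hA : IsCompact A)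
    (hlCont : Continuous fun z : Euc N × Euc M × Euc k => ℓ z.1 z.2.1 z.2.2)
    (hlCoer : ∀ B : Set (Euc N), IsCompact B → ∀ c : ℝ, ∃ R : ℝ,
      ∀ y : Euc M, R < ‖y‖ → ∀ x ∈ B, ∀ a ∈ A, c < ℓ x y a)
    (hu0Cont : Continuous fun z : Euc N × Euc M => u0 z.1 z.2)
    (hu0Bdd : ∀ x y, -Q ≤ u0 x y) (x0 : Euc N) (y0 z0 : Euc M) {t0 : ℝ} (ht0 : 0 < t0) :
      lowerLim (fun ε (z : Euc N × Euc M × ℝ) => valueFun A f g ℓ u0 ε z.1 z.2.1 z.2.2)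
        (x0, y0, t0) ≤
      lowerLim (fun ε (z : Euc N × Euc M × ℝ) => valueFun A f g ℓ u0 ε z.1 z.2.1 z.2.2)
        (x0, z0, t0) := by
  obtain ⟨m, hm⟩ := val_bdd hS hA hlCont hlCoer hu0Cont hu0Bdd x0 y0 ht0
  unfold lowerLim
  refine le_csInf ?_ ?_
  · obtain ⟨e, w, h1, h2, h3⟩ := seq_exists (x0, z0, t0)
    exact ⟨_, e, w, h1, h2, h3, rfl⟩
  · rintro l ⟨e, w, h1, h2, h3, rfl⟩
    obtain ⟨w', hw', hle⟩ := transfer_bwd hS hA hlCont hlCoer hu0Cont hu0Bdd x0 y0 z0 ht0 e w h1 h2 h3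
    refine le_trans (csInf_le ⟨-m, ?_⟩ ⟨e, w', h1, h2, hw', rfl⟩) hle
    rintro l ⟨e, w, h1, h2, h3, rfl⟩
    have hb := hm e w h1 h2 h3
    refine le_liminf_of_le (bdd_of_eventually hb).1.isCoboundedUnder_ge ?_
    filter_upwards [hb] with n hn using (abs_le.1 hn).1

end fin
end


theorem statement7
    {N M k : ℕ} (A : Set (Euc k)) (hA : IsCompact A) (hAne : A.Nonempty)
    (f : Euc N → Euc M → Euc k → Euc N) (g : Euc N → Euc M → Euc k → Euc M)
    (L0 Q0 : ℝ) (hL0 : 0 < L0) (hQ0 : 0 < Q0)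
    (hfLip : ∀ (x₁ x₂ : Euc N) (y₁ y₂ : Euc M), ∀ a ∈ A,
      ‖f x₁ y₁ a - f x₂ y₂ a‖ ≤ L0 * (‖x₁ - x₂‖ + ‖y₁ - y₂‖))
    (hgLip : ∀ (x₁ x₂ : Euc N) (y₁ y₂ : Euc M), ∀ a ∈ A,
      ‖g x₁ y₁ a - g x₂ y₂ a‖ ≤ L0 * (‖x₁ - x₂‖ + ‖y₁ - y₂‖))
    (hfBdd : ∀ x y, ∀ a ∈ A, ‖f x y a‖ ≤ Q0)
    (hctrl : ∀ K : Set (Euc N × Euc M), IsCompact K → ∃ r > 0, ∀ z ∈ K,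
      Metric.ball (0 : Euc M) r ⊆ closure (convexHull ℝ ((fun a => g z.1 z.2 a) '' A)))
    (ℓ : Euc N → Euc M → Euc k → ℝ)
    (hlCont : Continuous fun z : Euc N × Euc M × Euc k => ℓ z.1 z.2.1 z.2.2)
    (hlCoer : ∀ B : Set (Euc N), IsCompact B → ∀ c : ℝ, ∃ R : ℝ,
      ∀ y : Euc M, R < ‖y‖ → ∀ x ∈ B, ∀ a ∈ A, c < ℓ x y a)
    (u0 : Euc N → Euc M → ℝ)
    (hu0Cont : Continuous fun z : Euc N × Euc M => u0 z.1 z.2)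
    (hu0Bdd : ∀ x y, -Q0 ≤ u0 x y)
 :
    ∀ (x0 : Euc N) (y0 z0 : Euc M) (t0 : ℝ), 0 < t0 →
      lowerLim (fun ε (z : Euc N × Euc M × ℝ) => valueFun A f g ℓ u0 ε z.1 z.2.1 z.2.2)
        (x0, y0, t0) =
      lowerLim (fun ε (z : Euc N × Euc M × ℝ) => valueFun A f g ℓ u0 ε z.1 z.2.1 z.2.2)
        (x0, z0, t0) ∧
      upperLim (fun ε (z : Euc N × Euc M × ℝ) => valueFun A f g ℓ u0 ε z.1 z.2.1 z.2.2)
        (x0, y0, t0) =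
      upperLim (fun ε (z : Euc N × Euc M × ℝ) => valueFun A f g ℓ u0 ε z.1 z.2.1 z.2.2)
        (x0, z0, t0) := by
  have hS : SysHyp A f g L0 Q0 :=
    { ne := hAne, hL := hL0.le, hQ := hQ0.le, fLip := hfLip, gLip := hgLip, fB := hfBdd,
      ctrl := fun K hK => by
        obtain ⟨r, hr, H⟩ := hctrl K hK
        exact ⟨r / 2, by positivity, fun z hz u hu =>
          halfspace_of_closure (fun a => g z.1 z.2 a) hr (H z hz) u hu⟩ }
  intro x0 y0 z0 t0 ht0
  exact ⟨le_antisymm (lower_le hS hA hlCont hlCoer hu0Cont hu0Bdd x0 y0 z0 ht0)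
      (lower_le hS hA hlCont hlCoer hu0Cont hu0Bdd x0 z0 y0 ht0),
    le_antisymm (upper_le hS hA hlCont hlCoer hu0Cont hu0Bdd x0 y0 z0 ht0)
      (upper_le hS hA hlCont hlCoer hu0Cont hu0Bdd x0 z0 y0 ht0)⟩
end

section
/- Under assumptions (H1)–(H4), fix (x0,p0) ∈ ℝ^N × ℝ^N with c0 = H̄(x0,p0) finite. Suppose b ≥ c0 is such that the equation H0(y,Du) = b admits a coercive viscosity solution on ℝ^M (a solution w with w(y) → +∞ as |y| → +∞) and such that for every compact K ⊆ ℝ^M one has inf_{y0 ∈ K} S_b(y, y0) → +∞ as |y| → +∞. Then b = c0 and the Aubry set 𝒜0 of H0 is nonempty. -/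
open Set MeasureTheory Metric Filter
open scoped RealInnerProductSpace Topology

/-! ### Test functions -/

lemma test_contDiff {m : ℕ} (ψ : Euc m → ℝ) (hψ : ContDiff ℝ 1 ψ) (α β γ : ℝ) (p r : Euc m) :
    ContDiff ℝ 1 (fun z => α * ψ z + β * ‖z - p‖ ^ 2 + γ * ‖z - r‖ ^ 2) := by
  have h1 : ContDiff ℝ 1 (fun z : Euc m => ‖z - p‖ ^ 2) :=
    (contDiff_id.sub contDiff_const).norm_sq ℝ
  have h2 : ContDiff ℝ 1 (fun z : Euc m => ‖z - r‖ ^ 2) :=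
    (contDiff_id.sub contDiff_const).norm_sq ℝ
  exact ((contDiff_const.mul hψ).add (contDiff_const.mul h1)).add (contDiff_const.mul h2)

lemma test_gradient {m : ℕ} (ψ : Euc m → ℝ) (hψ : ContDiff ℝ 1 ψ) (α β γ : ℝ) (p r y : Euc m) :
    gradient (fun z => α * ψ z + β * ‖z - p‖ ^ 2 + γ * ‖z - r‖ ^ 2) y =
      α • gradient ψ y + (2 * β) • (y - p) + (2 * γ) • (y - r) := by
  apply HasGradientAt.gradient
  rw [hasGradientAt_iff_hasFDerivAt]
  have h0 : HasFDerivAt ψ (InnerProductSpace.toDual ℝ (Euc m) (gradient ψ y)) y := by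
    rw [← hasGradientAt_iff_hasFDerivAt]
    exact ((hψ.differentiable one_ne_zero) y).hasGradientAt
  have h1 := ((hasFDerivAt_id y).sub_const p).norm_sq
  have h2 := ((hasFDerivAt_id y).sub_const r).norm_sq
  have h := ((h0.const_mul α).add (h1.const_mul β)).add (h2.const_mul γ)
  refine h.congr_fderiv ?_
  ext v
  simp [inner_add_left, inner_smul_left]
  ring

lemma quad_contDiff {m : ℕ} (ψ : Euc m → ℝ) (hψ : ContDiff ℝ 1 ψ) (s k K t : ℝ) :
    ContDiff ℝ 1 (fun z => s + k * (ψ z - t) + K * (ψ z - t) ^ 2) := by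
  fun_prop

lemma quad_gradient {m : ℕ} (ψ : Euc m → ℝ) (hψ : ContDiff ℝ 1 ψ) (s k K : ℝ) (y : Euc m) :
    gradient (fun z => s + k * (ψ z - ψ y) + K * (ψ z - ψ y) ^ 2) y = k • gradient ψ y := by
  apply HasGradientAt.gradient
  rw [hasGradientAt_iff_hasFDerivAt]
  have h0 : HasFDerivAt ψ (InnerProductSpace.toDual ℝ (Euc m) (gradient ψ y)) y := by
    rw [← hasGradientAt_iff_hasFDerivAt]
    exact ((hψ.differentiable one_ne_zero) y).hasGradientAt
  have h1 := h0.sub_const (ψ y)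
  have h := ((h1.const_mul k).const_add s).add ((h1.pow 2).const_mul K)
  refine h.congr_fderiv ?_
  ext v
  simp [inner_smul_left]

/-- Penalization lemma. -/
lemma penal {Z : Type*} [TopologicalSpace Z] (F D : Z → ℝ) (hF : UpperSemicontinuous F)
    (hD : Continuous D) (hD0 : ∀ z, 0 ≤ D z) (C : Set Z) (hC : IsCompact C) (V : Set Z)
    (hV : IsOpen V) (m : ℝ) (h : ∀ z ∈ C, z ∉ V → D z = 0 → F z < m) :
    ∃ n : ℕ, ∀ n2 : ℕ, n ≤ n2 → ∀ z ∈ C, m ≤ F z - n2 * D z → z ∈ V := by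
  have hmono : ∀ n n2 : ℕ, n ≤ n2 → ∀ z, F z - n2 * D z ≤ F z - n * D z := by
    intro n n2 hn z
    have : (n : ℝ) * D z ≤ n2 * D z :=
      mul_le_mul_of_nonneg_right (by exact_mod_cast hn) (hD0 z)
    linarith
  have key : ∃ n : ℕ, C \ V ⊆ {z | F z - n * D z < m} := by
    apply (hC.diff hV).elim_directed_cover
    · intro n
      have : UpperSemicontinuous (fun z => F z + (-(n * D z))) :=
        hF.add (by fun_prop : Continuous fun z => -((n:ℝ) * D z)).upperSemicontinuous
      have := this.isOpen_preimage m
      convert this using 1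
      ext z
      simp [sub_eq_add_neg]
    · rintro z ⟨hz, hzV⟩
      rw [mem_iUnion]
      rcases (hD0 z).eq_or_lt with h0 | h0
      · refine ⟨0, ?_⟩
        have := h z hz hzV h0.symm
        simpa using this
      · obtain ⟨n, hn⟩ := exists_nat_gt ((F z - m) / D z)
        refine ⟨n, ?_⟩
        rw [div_lt_iff₀ h0] at hn
        simp only [mem_ofPred_eq]
        linarith
    · apply directed_of_isDirected_le
      intro n n2 hn z hz
      exact lt_of_le_of_lt (hmono n n2 hn z) hz
  obtain ⟨n, hn⟩ := key
  refine ⟨n, fun n2 hnn2 z hz hm => ?_⟩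
  by_contra hzV
  have h1 : F z - n * D z < m := hn ⟨hz, hzV⟩
  linarith [hmono n n2 hnn2 z]

/-! ### Subsolutions with a variable level, in the control form -/

/-- Viscosity subsolution in control form with variable level `κ`. -/
def TS {m k : ℕ} (A : Set (Euc k)) (G : Euc k → Euc m → Euc m) (E : Euc k → Euc m → ℝ)
    (κ : Euc m → ℝ) (u : Euc m → ℝ) : Prop :=
  UpperSemicontinuous u ∧ ∀ ψ : Euc m → ℝ, ContDiff ℝ 1 ψ → ∀ y,
    IsLocalMax (fun z => u z - ψ z) y → ∀ a ∈ A, -⟪gradient ψ y, G a y⟫ - E a y ≤ κ y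

lemma TS_avg {m k : ℕ} {A : Set (Euc k)} {G : Euc k → Euc m → Euc m} {E : Euc k → Euc m → ℝ}
    {L : ℝ} (hL : 0 < L)
    (hG : ∀ a ∈ A, ∀ y y', ‖G a y - G a y'‖ ≤ L * ‖y - y'‖)
    (hE : ∀ a ∈ A, Continuous (E a))
    {κ₁ κ₂ u₁ u₂ : Euc m → ℝ} (hκ₁ : UpperSemicontinuous κ₁) (hκ₂ : UpperSemicontinuous κ₂)
    (h₁ : TS A G E κ₁ u₁) (h₂ : TS A G E κ₂ u₂) :
    TS A G E (fun y => 1/2 * κ₁ y + 1/2 * κ₂ y) (fun y => 1/2 * u₁ y + 1/2 * u₂ y) := by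
  have hhalf : ∀ {X : Type} [TopologicalSpace X] {v : X → ℝ}, UpperSemicontinuous v →
      UpperSemicontinuous (fun y => 1/2 * v y) := by
    intro X _ v hv
    exact (by fun_prop : Continuous fun t : ℝ => 1/2 * t).comp_upperSemicontinuous hv
      (fun s t hst => by simp only; linarith)
  refine ⟨(hhalf h₁.1).add (hhalf h₂.1), ?_⟩
  intro ψ hψ y₀ hmax a ha
  by_contra hcon
  push Not at hcon
  have hGc : Continuous (G a) := by
    have : LipschitzWith L.toNNReal (G a) := by
      apply LipschitzWith.of_dist_le_mul
      intro x y
      rw [dist_eq_norm, dist_eq_norm, Real.coe_toNNReal _ hL.le]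
      exact hG a ha x y
    exact this.continuous
  have hgc : Continuous (gradient ψ) := by
    have : Continuous (fderiv ℝ ψ) := hψ.continuous_fderiv one_ne_zero
    exact (InnerProductSpace.toDual ℝ (Euc m)).symm.continuous.comp this
  have hEc := hE a ha
  have hψc := hψ.continuous
  -- negative of the limit quantity
  set T : Euc m × Euc m → ℝ := fun z => ((1/2 * κ₁ z.1 + 1/2 * κ₂ z.2) +
    (⟪gradient ψ z.1 + (2:ℝ) • (z.1 - y₀), G a z.1⟫ + (1/2 * E a z.1 + 1/2 * E a z.2))) with hT
  have hTusc : UpperSemicontinuous T := by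
    have c1 : UpperSemicontinuous (fun z : Euc m × Euc m => 1/2 * κ₁ z.1) :=
      (hhalf hκ₁).comp continuous_fst
    have c2 : UpperSemicontinuous (fun z : Euc m × Euc m => 1/2 * κ₂ z.2) :=
      (hhalf hκ₂).comp continuous_snd
    refine (c1.add c2).add ?_
    apply Continuous.upperSemicontinuous
    fun_prop
  set τ : ℝ := T (y₀, y₀) with hτ
  have hτneg : τ < 0 := by
    simp only [hτ, hT, sub_self, smul_zero, add_zero]
    linarith
  set F : Euc m × Euc m → ℝ := fun z => (1/2 * u₁ z.1 + 1/2 * u₂ z.2) +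
    (- ψ z.1 - ‖z.1 - y₀‖ ^ 2) with hF
  have hFusc : UpperSemicontinuous F := by
    have c1 : UpperSemicontinuous (fun z : Euc m × Euc m => 1/2 * u₁ z.1) :=
      (hhalf h₁.1).comp continuous_fst
    have c2 : UpperSemicontinuous (fun z : Euc m × Euc m => 1/2 * u₂ z.2) :=
      (hhalf h₂.1).comp continuous_snd
    refine (c1.add c2).add ?_
    apply Continuous.upperSemicontinuous
    fun_prop
  set μ : ℝ := F (y₀, y₀) with hμ
  set D : Euc m × Euc m → ℝ := fun z => ‖z.1 - z.2‖ ^ 2 with hD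
  have hDc : Continuous D := by fun_prop
  obtain ⟨r, hr, hrmax⟩ : ∃ r > 0, ∀ z, dist z y₀ < r →
      (1/2 * u₁ z + 1/2 * u₂ z) - ψ z ≤ (1/2 * u₁ y₀ + 1/2 * u₂ y₀) - ψ y₀ :=
    Metric.eventually_nhds_iff.1 hmax
  set η : ℝ := -τ / (4 * L) with hη
  have hηpos : 0 < η := div_pos (by linarith) (by linarith)
  have hLη : 4 * L * η = -τ := by
    rw [hη]; field_simp
  set V : Set (Euc m × Euc m) := (T ⁻¹' Iio (τ / 2) ∩ F ⁻¹' Iio (μ + η)) ∩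
    (ball y₀ (r/2) ×ˢ ball y₀ (r/2)) with hVdef
  have hVo : IsOpen V :=
    ((hTusc.isOpen_preimage _).inter (hFusc.isOpen_preimage _)).inter
      (isOpen_ball.prod isOpen_ball)
  set C : Set (Euc m × Euc m) := closedBall y₀ (r/2) ×ˢ closedBall y₀ (r/2) with hC
  have hCc : IsCompact C := (isCompact_closedBall _ _).prod (isCompact_closedBall _ _)
  obtain ⟨n, hn⟩ := penal F D hFusc hDc (fun z => by positivity) C hCc V hVo μ (by
    rintro ⟨x, y⟩ hz hzV hD0
    have hxy : x = y := by
      have : ‖x - y‖ = 0 := by simpa [hD] using hD0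
      exact sub_eq_zero.1 (norm_eq_zero.1 this)
    subst hxy
    have hx : x ≠ y₀ := by
      rintro rfl
      apply hzV
      refine ⟨⟨?_, ?_⟩, ?_⟩
      · simp only [mem_preimage, mem_Iio]
        linarith
      · simp only [mem_preimage, mem_Iio]
        linarith
      · exact ⟨mem_ball_self (by linarith), mem_ball_self (by linarith)⟩
    have h1 := hrmax x (by
      have : dist x y₀ ≤ r/2 := hz.1
      linarith)
    have h2 : 0 < ‖x - y₀‖ ^ 2 := by
      have : 0 < ‖x - y₀‖ := norm_pos_iff.2 (sub_ne_zero.2 hx)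
      positivity
    simp only [hF, hμ, sub_self, norm_zero]
    linarith)
  obtain ⟨⟨x, y⟩, hzC, hzmax⟩ := UpperSemicontinuousOn.exists_isMaxOn
    (f := fun z => F z + (-(n * D z))) (s := C)
    ⟨(y₀, y₀), mem_closedBall_self (by linarith), mem_closedBall_self (by linarith)⟩ hCc
    ((hFusc.add (by fun_prop : Continuous fun z => -((n:ℝ) * D z)).upperSemicontinuous).upperSemicontinuousOn _)
  have hge : μ ≤ F (x, y) - n * D (x, y) := by
    have := hzmax (show (y₀, y₀) ∈ C from
      ⟨mem_closedBall_self (by linarith), mem_closedBall_self (by linarith)⟩)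
    simp only [mem_ofPred_eq] at this
    have h0 : D (y₀, y₀) = 0 := by simp [hD]
    rw [h0] at this
    simp only [mul_zero, neg_zero, add_zero] at this
    linarith
  have hzV := hn n le_rfl (x, y) hzC hge
  obtain ⟨⟨hVT, hVF⟩, hVx, hVy⟩ := hzV
  simp only [mem_preimage, mem_Iio] at hVT hVF
  simp only at hVx hVy
  have hnD : n * ‖x - y‖ ^ 2 < η := by
    have : n * D (x, y) < η := by linarith
    exact this
  -- test for u₁
  have t1 := h₁.2 (fun z => 2 * ψ z + 2 * ‖z - y₀‖ ^ 2 + (2 * n) * ‖z - y‖ ^ 2)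
    (test_contDiff ψ hψ _ _ _ _ _) x (by
      filter_upwards [isOpen_ball.mem_nhds hVx] with x' hx'
      have := hzmax (show (x', y) ∈ C from ⟨ball_subset_closedBall hx', ball_subset_closedBall hVy⟩)
      simp only [mem_ofPred_eq, hF, hD] at this
      linarith) a ha
  have t2 := h₂.2 (fun z => 0 * ψ z + 0 * ‖z - y₀‖ ^ 2 + (2 * n) * ‖z - x‖ ^ 2)
    (test_contDiff ψ hψ _ _ _ _ _) y (by
      filter_upwards [isOpen_ball.mem_nhds hVy] with y' hy'
      have := hzmax (show (x, y') ∈ C from ⟨ball_subset_closedBall hVx, ball_subset_closedBall hy'⟩)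
      simp only [mem_ofPred_eq, hF, hD] at this
      rw [norm_sub_rev y' x, norm_sub_rev y x]
      linarith) a ha
  rw [test_gradient ψ hψ] at t1 t2
  have hcs : |⟪x - y, G a x - G a y⟫| ≤ L * ‖x - y‖ ^ 2 := by
    calc |⟪x - y, G a x - G a y⟫| ≤ ‖x - y‖ * ‖G a x - G a y‖ := abs_real_inner_le_norm _ _
      _ ≤ ‖x - y‖ * (L * ‖x - y‖) := by gcongr; exact hG a ha x y
      _ = L * ‖x - y‖ ^ 2 := by ring
  have hcs2 : n * ⟪x - y, G a x - G a y⟫ ≤ L * η := by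
    calc n * ⟪x - y, G a x - G a y⟫ ≤ n * (L * ‖x - y‖ ^ 2) := by
          gcongr; exact (le_abs_self _).trans hcs
      _ = L * (n * ‖x - y‖ ^ 2) := by ring
      _ ≤ L * η := by gcongr
  have hcs3 : - (L * η) ≤ n * ⟪x - y, G a x - G a y⟫ := by
    have : n * (-⟪x - y, G a x - G a y⟫) ≤ L * η := by
      calc n * (-⟪x - y, G a x - G a y⟫) ≤ n * (L * ‖x - y‖ ^ 2) := by
            gcongr; exact (neg_le_abs _).trans hcs
        _ = L * (n * ‖x - y‖ ^ 2) := by ring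
        _ ≤ L * η := by gcongr
    linarith
  simp only [hT] at hVT
  simp only [inner_add_left, inner_smul_left, inner_sub_left, inner_sub_right, zero_smul,
    mul_zero, inner_zero_left, RCLike.conj_to_real] at t1 t2 hVT hcs2 hcs3
  linarith

/-! ### Truncation from above -/

/-- Bounded-above truncation, equal to the identity on the negatives. -/
noncomputable def trunc (s : ℝ) : ℝ := s / (1 + max s 0)

lemma trunc_of_nonpos {s : ℝ} (h : s ≤ 0) : trunc s = s := by
  simp [trunc, max_eq_right h]

lemma trunc_of_nonneg {s : ℝ} (h : 0 ≤ s) : trunc s = s / (1 + s) := by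
  simp [trunc, max_eq_left h]

lemma trunc_continuous : Continuous trunc := by
  unfold trunc
  apply Continuous.div (by fun_prop) (by fun_prop)
  intro s
  have := le_max_right s 0
  positivity

lemma trunc_lt_one (s : ℝ) : trunc s < 1 := by
  rcases le_total s 0 with h | h
  · rw [trunc_of_nonpos h]; linarith
  · rw [trunc_of_nonneg h, div_lt_one (by linarith)]; linarith

lemma trunc_mono : Monotone trunc := by
  intro s t hst
  rcases le_total s 0 with h | h
  · rw [trunc_of_nonpos h]
    rcases le_total t 0 with h' | h'
    · rw [trunc_of_nonpos h']; exact hst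
    · rw [trunc_of_nonneg h']
      have : 0 ≤ t / (1 + t) := by positivity
      linarith
  · have h' : 0 ≤ t := h.trans hst
    rw [trunc_of_nonneg h, trunc_of_nonneg h', div_le_div_iff₀ (by linarith) (by linarith)]
    nlinarith

/-- Quadratic upper bound for the inverse of `trunc`. -/
lemma trunc_inv_bound {s₀ : ℝ} (hs₀ : 0 ≤ s₀) {s d : ℝ}
    (hd1 : d ≤ 1 / (2 * (1 + s₀))) (hd2 : s₀ = 0 ∨ 0 ≤ s₀ + (1 + s₀) ^ 2 * d)
    (h : trunc s ≤ trunc s₀ + d) :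
    s ≤ s₀ + (1 + s₀) ^ 2 * d + (2 * (1 + s₀) ^ 3) * d ^ 2 := by
  have hK : 0 ≤ (2 * (1 + s₀) ^ 3) * d ^ 2 := by positivity
  rcases lt_or_ge s 0 with hs | hs
  · rcases hd2 with h0 | h0
    · subst h0
      rw [trunc_of_nonpos hs.le, trunc_of_nonpos le_rfl] at h
      nlinarith
    · linarith
  · rw [trunc_of_nonneg hs, trunc_of_nonneg hs₀] at h
    set p := 1 + s₀ with hp
    have hp0 : 0 < p := by linarith
    have hpd : p * d ≤ 1 / 2 := by
      have := mul_le_mul_of_nonneg_left hd1 hp0.le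
      have h2 : p * (1 / (2 * p)) = 1 / 2 := by field_simp
      linarith
    -- s / (1+s) = 1 - 1/(1+s)
    have e1 : s / (1 + s) = 1 - 1 / (1 + s) := by field_simp; ring
    have e2 : s₀ / p = 1 - 1 / p := by rw [hp]; field_simp; ring
    rw [e1, e2] at h
    have h3 : 1 / p - d ≤ 1 / (1 + s) := by linarith
    have h4 : (1 + s) * (1 - p * d) ≤ p := by
      have h5 := mul_le_mul_of_nonneg_left h3 (show 0 ≤ (1 + s) * p by positivity)
      have e3 : (1 + s) * p * (1 / p - d) = (1 + s) * (1 - p * d) := by field_simp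
      have e4 : (1 + s) * p * (1 / (1 + s)) = p := by field_simp
      linarith
    -- claim 1 + s ≤ p + p^2 d + 2 p^3 d^2
    have h6 : p ≤ (p + p ^ 2 * d + 2 * p ^ 3 * d ^ 2) * (1 - p * d) := by
      have e5 : (p + p ^ 2 * d + 2 * p ^ 3 * d ^ 2) * (1 - p * d) - p =
        p ^ 3 * d ^ 2 * (1 - 2 * (p * d)) := by ring
      have : 0 ≤ p ^ 3 * d ^ 2 * (1 - 2 * (p * d)) :=
        mul_nonneg (by positivity) (by linarith)
      linarith
    have h7 : 0 < 1 - p * d := by linarith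
    have h8 := le_of_mul_le_mul_right (h4.trans h6) h7
    linarith

lemma TS_trunc {m k : ℕ} {A : Set (Euc k)} {G : Euc k → Euc m → Euc m} {E : Euc k → Euc m → ℝ}
    {c : ℝ} {u : Euc m → ℝ} (hu : TS A G E (fun _ => c) u)
    (hneg : ∀ y, ∀ a ∈ A, c < - E a y → u y ≤ 0) :
    TS A G E (fun _ => c) (fun y => trunc (u y)) := by
  refine ⟨trunc_continuous.comp_upperSemicontinuous hu.1 trunc_mono, ?_⟩
  intro ψ hψ y₀ hmax a ha
  have hdc : Tendsto (fun z => ψ z - ψ y₀) (𝓝 y₀) (𝓝 0) := by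
    have : Continuous (fun z => ψ z - ψ y₀) := hψ.continuous.sub continuous_const
    simpa using this.tendsto y₀
  rcases lt_or_ge (u y₀) 0 with hs | hs
  · apply hu.2 ψ hψ y₀ _ a ha
    filter_upwards [hmax, hdc.eventually (eventually_lt_nhds (show 0 < -u y₀ by linarith))]
      with z hz hd
    rw [trunc_of_nonpos hs.le] at hz
    rcases lt_or_ge (u z) 0 with h | h
    · rw [trunc_of_nonpos h.le] at hz
      exact hz
    · have : 0 ≤ trunc (u z) := by rw [trunc_of_nonneg h]; positivity
      linarith
  · set s₀ := u y₀ with hs₀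
    have hp : 0 < 1 + s₀ := by linarith
    have key := hu.2 (fun z => s₀ + (1 + s₀) ^ 2 * (ψ z - ψ y₀) +
      (2 * (1 + s₀) ^ 3) * (ψ z - ψ y₀) ^ 2) (quad_contDiff ψ hψ _ _ _ _) y₀ (by
        have ev2 : ∀ᶠ z in 𝓝 y₀, s₀ = 0 ∨ 0 ≤ s₀ + (1 + s₀) ^ 2 * (ψ z - ψ y₀) := by
          rcases hs.eq_or_lt with h | h
          · exact Eventually.of_forall fun z => Or.inl h.symm
          · have : Tendsto (fun z => s₀ + (1 + s₀) ^ 2 * (ψ z - ψ y₀)) (𝓝 y₀) (𝓝 (s₀ + (1+s₀)^2 * 0)) :=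
              (hdc.const_mul _).const_add _
            filter_upwards [this.eventually (eventually_gt_nhds (show 0 < s₀ + (1+s₀)^2 * 0 by simpa using h))]
              with z hz
            exact Or.inr hz.le
        filter_upwards [hmax, ev2, hdc.eventually (eventually_lt_nhds
          (show 0 < 1 / (2 * (1 + s₀)) by positivity))] with z hz h2 h1
        have := trunc_inv_bound hs h1.le h2 (s := u z) (by linarith)
        simp only [sub_self]
        nlinarith) a ha
    rw [quad_gradient ψ hψ, inner_smul_left] at key
    simp only [RCLike.conj_to_real] at key
    by_cases hEc : c < - E a y₀
    · have h0 : s₀ = 0 := le_antisymm (hneg y₀ a ha hEc) hs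
      rw [h0] at key
      linarith
    · push Not at hEc
      set q := ⟪gradient ψ y₀, G a y₀⟫
      have hk : 1 ≤ (1 + s₀) ^ 2 := by nlinarith
      set kk := (1 + s₀) ^ 2
      have : kk * (-q - E a y₀ - c) ≤ 0 := by nlinarith
      have := nonpos_of_mul_nonpos_right this (by linarith)
      linarith

/-! ### Comparison -/

lemma comparison {m k : ℕ} {A : Set (Euc k)} (hAne : A.Nonempty)
    {G : Euc k → Euc m → Euc m} {E : Euc k → Euc m → ℝ}
    {L : ℝ} (hL : 0 < L)
    (hG : ∀ a ∈ A, ∀ y y', ‖G a y - G a y'‖ ≤ L * ‖y - y'‖)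
    (hE : ∀ R η : ℝ, 0 < η → ∃ ρ > 0, ∀ y y' : Euc m, ‖y‖ ≤ R → ‖y'‖ ≤ R → ‖y - y'‖ < ρ →
      ∀ a ∈ A, |E a y - E a y'| ≤ η)
    {H : Euc m → Euc m → ℝ} (hH : ∀ y q, H y q = sSup ((fun a => -⟪q, G a y⟫ - E a y) '' A))
    {b c : ℝ} {v w : Euc m → ℝ} (hv : TS A G E (fun _ => c) v) (hv1 : ∀ y, v y ≤ 1)
    (hw : IsVSupOn H b univ w)
    (hwcoer : ∀ c : ℝ, ∃ R : ℝ, ∀ y : Euc m, R < ‖y‖ → c < w y) : b ≤ c := by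
  by_contra hcb
  push Not at hcb
  have hwl : LowerSemicontinuous w := lowerSemicontinuousOn_univ_iff.1 hw.1
  set F : Euc m × Euc m → ℝ := fun z => v z.1 + (- w) z.2 with hF
  have hFusc : UpperSemicontinuous F := by
    have c1 : UpperSemicontinuous (fun z : Euc m × Euc m => v z.1) := hv.1.comp continuous_fst
    have c2 : UpperSemicontinuous (fun z : Euc m × Euc m => (-w) z.2) :=
      hwl.neg.comp continuous_snd
    exact c1.add c2
  have hdiag : UpperSemicontinuous (fun y => F (y, y)) := hFusc.comp (by fun_prop)
  -- maximum of v - w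
  obtain ⟨R₀, hR₀⟩ := hwcoer (1 - F (0, 0))
  obtain ⟨y₀, -, hy₀⟩ := UpperSemicontinuousOn.exists_isMaxOn (s := closedBall (0 : Euc m) (max R₀ 0))
    ⟨0, mem_closedBall_self (le_max_right _ _)⟩ (isCompact_closedBall _ _)
    (hdiag.upperSemicontinuousOn _)
  set μ := F (y₀, y₀) with hμ
  have hμmax : ∀ y, F (y, y) ≤ μ := by
    intro y
    by_cases hy : ‖y‖ ≤ max R₀ 0
    · exact hy₀ (by simpa using hy)
    · push Not at hy
      have h1 := hR₀ y (lt_of_le_of_lt (le_max_left _ _) hy)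
      have h2 : F (0, 0) ≤ μ := hy₀ (mem_closedBall_self (le_max_right _ _))
      have h3 := hv1 y
      simp only [hF, Pi.neg_apply] at h2 ⊢
      simp only [hF, Pi.neg_apply] at h1
      linarith
  -- lower bound for w
  obtain ⟨B, hB⟩ : ∃ B, ∀ y, B ≤ w y := by
    obtain ⟨R, hR⟩ := hwcoer 0
    obtain ⟨z, -, hz⟩ := LowerSemicontinuousOn.exists_isMinOn (s := closedBall (0 : Euc m) (max R 0))
      ⟨0, mem_closedBall_self (le_max_right _ _)⟩ (isCompact_closedBall _ _)
      (hwl.lowerSemicontinuousOn _)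
    refine ⟨min 0 (w z), fun y => ?_⟩
    by_cases hy : ‖y‖ ≤ max R 0
    · exact (min_le_right _ _).trans (hz (by simpa using hy))
    · push Not at hy
      exact (min_le_left _ _).trans (hR y (lt_of_le_of_lt (le_max_left _ _) hy)).le
  obtain ⟨R₁, hR₁⟩ := hwcoer (1 - μ)
  set S := |1 - μ - B| + 1 with hS
  set R := max R₁ 0 + S with hR
  have hSpos : 1 ≤ S := by have := abs_nonneg (1 - μ - B); linarith
  set D : Euc m × Euc m → ℝ := fun z => ‖z.1 - z.2‖ ^ 2 with hD
  have hDc : Continuous D := by fun_prop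
  have hloc : ∀ n : ℕ, 1 ≤ n → ∀ x y, μ ≤ F (x, y) - n * D (x, y) → ‖x‖ ≤ R ∧ ‖y‖ ≤ R := by
    intro n hn x y h
    have hn' : (1 : ℝ) ≤ n := by exact_mod_cast hn
    simp only [hF, hD, Pi.neg_apply] at h
    have h1 := hv1 x
    have h2 := hB y
    have h3 : ‖x - y‖ ^ 2 ≤ n * ‖x - y‖ ^ 2 := le_mul_of_one_le_left (by positivity) hn'
    have hy : ‖y‖ ≤ max R₁ 0 := by
      by_contra hy
      push Not at hy
      have h4 := hR₁ y (lt_of_le_of_lt (le_max_left _ _) hy)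
      have : 0 ≤ ‖x - y‖ ^ 2 := by positivity
      linarith
    have h5 : ‖x - y‖ ≤ S := by
      have h6 : ‖x - y‖ ^ 2 ≤ S := by
        have := le_abs_self (1 - μ - B)
        linarith
      by_contra h7
      push Not at h7
      nlinarith
    refine ⟨?_, by linarith⟩
    calc ‖x‖ = ‖y + (x - y)‖ := by congr 1; abel
      _ ≤ ‖y‖ + ‖x - y‖ := norm_add_le _ _
      _ ≤ R := by linarith
  set η := (b - c) / (8 * L) with hη
  have hηpos : 0 < η := div_pos (by linarith) (by linarith)
  have hLη : 2 * L * η = (b - c) / 4 := by rw [hη]; field_simp; ring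
  obtain ⟨ρ, hρ, hEρ⟩ := hE R ((b - c) / 4) (by linarith)
  set V : Set (Euc m × Euc m) := F ⁻¹' Iio (μ + η) ∩ D ⁻¹' Iio (ρ ^ 2) with hV
  have hVo : IsOpen V := (hFusc.isOpen_preimage _).inter (isOpen_Iio.preimage hDc)
  set C : Set (Euc m × Euc m) := closedBall 0 R ×ˢ closedBall 0 R with hC
  have hCc : IsCompact C := (isCompact_closedBall _ _).prod (isCompact_closedBall _ _)
  obtain ⟨n, hn⟩ := penal F D hFusc hDc (fun z => by positivity) C hCc V hVo μ (by
    rintro ⟨x, y⟩ hz hzV hD0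
    exfalso
    have hxy : x = y := by
      have : ‖x - y‖ = 0 := by simpa [hD] using hD0
      exact sub_eq_zero.1 (norm_eq_zero.1 this)
    subst hxy
    apply hzV
    refine ⟨?_, ?_⟩
    · simp only [mem_preimage, mem_Iio]
      linarith [hμmax x]
    · simp only [mem_preimage, mem_Iio, hD0]
      positivity)
  set n' := n + 1 with hn'
  have hy₀C : (y₀, y₀) ∈ C := by
    have := hloc n' (by omega) y₀ y₀ (by simp [hD, hμ])
    exact ⟨by simpa using this.1, by simpa using this.1⟩
  obtain ⟨⟨x, y⟩, hzC, hzmax'⟩ := UpperSemicontinuousOn.exists_isMaxOn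
    (f := fun z => F z + (-(n' * D z))) (s := C) ⟨(y₀, y₀), hy₀C⟩ hCc
    ((hFusc.add (by fun_prop : Continuous fun z => -((n':ℝ) * D z)).upperSemicontinuous).upperSemicontinuousOn _)
  have hge : μ ≤ F (x, y) - n' * D (x, y) := by
    have := hzmax' hy₀C
    simp only [mem_ofPred_eq] at this
    have h0 : D (y₀, y₀) = 0 := by simp [hD]
    rw [h0] at this
    simp only [mul_zero, neg_zero, add_zero] at this
    linarith
  have hzmax : ∀ x' y', F (x', y') - n' * D (x', y') ≤ F (x, y) - n' * D (x, y) := by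
    intro x' y'
    by_cases h : μ ≤ F (x', y') - n' * D (x', y')
    · have h1 := hloc n' (by omega) x' y' h
      have := hzmax' (show (x', y') ∈ C from ⟨by simpa using h1.1, by simpa using h1.2⟩)
      simp only [mem_ofPred_eq] at this
      linarith
    · linarith
  have hzV := hn n' (by omega) (x, y) hzC hge
  obtain ⟨hVF, hVD⟩ := hzV
  simp only [mem_preimage, mem_Iio] at hVF hVD
  have hnD : n' * ‖x - y‖ ^ 2 < η := by
    have : n' * D (x, y) < η := by linarith
    exact this
  have hxyρ : ‖x - y‖ < ρ := lt_of_pow_lt_pow_left₀ 2 hρ.le hVD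
  have hball := hloc n' (by omega) x y hge
  have h0 : ContDiff ℝ 1 (fun _ : Euc m => (0:ℝ)) := contDiff_const
  have t1 := hv.2 (fun z => 0 * (0:ℝ) + 0 * ‖z - y‖ ^ 2 + n' * ‖z - y‖ ^ 2)
    (test_contDiff _ h0 _ _ _ _ _) x (by
      refine Eventually.of_forall fun x' => ?_
      have := hzmax x' y
      simp only [hF, hD] at this
      linarith)
  have t2 := hw.2 (fun z => 0 * (0:ℝ) + 0 * ‖z - x‖ ^ 2 + (-n') * ‖z - x‖ ^ 2)
    (test_contDiff _ h0 _ _ _ _ _) y (mem_univ _) (by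
      refine Eventually.of_forall fun y' => ?_
      have := hzmax x y'
      simp only [hF, hD, Pi.neg_apply] at this
      rw [norm_sub_rev x y', norm_sub_rev x y] at this
      linarith)
  rw [test_gradient _ h0] at t1 t2
  have hle : H y ((0:ℝ) • gradient (fun _ : Euc m => (0:ℝ)) y + (2 * (0:ℝ)) • (y - x) +
      (2 * (-(n':ℝ))) • (y - x)) ≤ c + (b - c) / 2 := by
    rw [hH]
    apply csSup_le (hAne.image _)
    rintro _ ⟨a, ha, rfl⟩
    have t1a := t1 a ha
    have hEa := hEρ x y hball.1 hball.2 hxyρ a ha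
    have hcs : -⟪x - y, G a y - G a x⟫ ≤ L * ‖x - y‖ ^ 2 := by
      calc -⟪x - y, G a y - G a x⟫ ≤ |⟪x - y, G a y - G a x⟫| := neg_le_abs _
        _ ≤ ‖x - y‖ * ‖G a y - G a x‖ := abs_real_inner_le_norm _ _
        _ ≤ ‖x - y‖ * (L * ‖x - y‖) := by
          gcongr; rw [norm_sub_rev x y]; exact hG a ha y x
        _ = L * ‖x - y‖ ^ 2 := by ring
    have hcs2 : n' * (-⟪x - y, G a y - G a x⟫) ≤ L * η := by
      calc n' * (-⟪x - y, G a y - G a x⟫) ≤ n' * (L * ‖x - y‖ ^ 2) := by gcongr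
        _ = L * (n' * ‖x - y‖ ^ 2) := by ring
        _ ≤ L * η := by gcongr
    have hEa' := (abs_le.1 hEa).2
    simp only [inner_add_left, inner_smul_left, inner_sub_left, inner_sub_right, zero_smul,
      mul_zero, inner_zero_left, RCLike.conj_to_real] at t1a hcs2 ⊢
    linarith
  have hfinal := t2.trans hle
  linarith

theorem statement16
    {N M k : ℕ} (A : Set (Euc k)) (hA : IsCompact A) (hAne : A.Nonempty)
    (f : Euc N → Euc M → Euc k → Euc N) (g : Euc N → Euc M → Euc k → Euc M)
    (L0 Q0 : ℝ) (hL0 : 0 < L0) (hQ0 : 0 < Q0)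
    (hfLip : ∀ (x₁ x₂ : Euc N) (y₁ y₂ : Euc M), ∀ a ∈ A,
      ‖f x₁ y₁ a - f x₂ y₂ a‖ ≤ L0 * (‖x₁ - x₂‖ + ‖y₁ - y₂‖))
    (hgLip : ∀ (x₁ x₂ : Euc N) (y₁ y₂ : Euc M), ∀ a ∈ A,
      ‖g x₁ y₁ a - g x₂ y₂ a‖ ≤ L0 * (‖x₁ - x₂‖ + ‖y₁ - y₂‖))
    (hfBdd : ∀ x y, ∀ a ∈ A, ‖f x y a‖ ≤ Q0)
    (hctrl : ∀ K : Set (Euc N × Euc M), IsCompact K → ∃ r > 0, ∀ z ∈ K,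
      Metric.ball (0 : Euc M) r ⊆ closure (convexHull ℝ ((fun a => g z.1 z.2 a) '' A)))
    (ℓ : Euc N → Euc M → Euc k → ℝ)
    (hlCont : Continuous fun z : Euc N × Euc M × Euc k => ℓ z.1 z.2.1 z.2.2)
    (hlCoer : ∀ B : Set (Euc N), IsCompact B → ∀ c : ℝ, ∃ R : ℝ,
      ∀ y : Euc M, R < ‖y‖ → ∀ x ∈ B, ∀ a ∈ A, c < ℓ x y a)
    (x0 p0 : Euc N)
    (hfin : (subsolLevels (cellH A f g ℓ x0 p0)).Nonempty)
    (hbdd : BddBelow (subsolLevels (cellH A f g ℓ x0 p0)))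
    (b : ℝ) (hb : effH A f g ℓ x0 p0 ≤ b)
    (w : Euc M → ℝ)
    (hwsub : IsVSubOn (cellH A f g ℓ x0 p0) b univ w)
    (hwsup : IsVSupOn (cellH A f g ℓ x0 p0) b univ w)
    (hwcoer : ∀ c : ℝ, ∃ R : ℝ, ∀ y : Euc M, R < ‖y‖ → c < w y)
    (hSb : ∀ Kc : Set (Euc M), IsCompact Kc → ∀ c : ℝ, ∃ R : ℝ,
      ∀ y : Euc M, R < ‖y‖ → ∀ y0 ∈ Kc,
        c < intrinsicDist (cellH A f g ℓ x0 p0) b y y0) :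
    b = effH A f g ℓ x0 p0 ∧
    (AubrySet (cellH A f g ℓ x0 p0) (effH A f g ℓ x0 p0)).Nonempty := by
  classical
  set H := cellH A f g ℓ x0 p0 with hHdef
  set c0 := effH A f g ℓ x0 p0 with hc0def
  have hc0 : c0 = sInf (subsolLevels H) := rfl
  set G : Euc k → Euc M → Euc M := fun a y => g x0 y a with hGdef
  set E : Euc k → Euc M → ℝ := fun a y => ⟪p0, f x0 y a⟫ + ℓ x0 y a with hEdef
  have hH : ∀ y q, H y q = sSup ((fun a => -⟪q, G a y⟫ - E a y) '' A) := by
    intro y q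
    simp only [hHdef, cellH, Ham, hGdef, hEdef]
    congr 1
    apply image_congr
    intro a _
    ring
  have hG : ∀ a ∈ A, ∀ y y', ‖G a y - G a y'‖ ≤ L0 * ‖y - y'‖ := by
    intro a ha y y'
    have := hgLip x0 x0 y y' a ha
    simpa using this
  have hlc : ∀ y, Continuous (fun a => ℓ x0 y a) := by
    intro y
    exact hlCont.comp (by fun_prop : Continuous fun a : Euc k => ((x0, y, a) : Euc N × Euc M × Euc k))
  have hpf : ∀ y, ∀ a ∈ A, |⟪p0, f x0 y a⟫| ≤ ‖p0‖ * Q0 := by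
    intro y a ha
    refine (abs_real_inner_le_norm _ _).trans ?_
    gcongr
    exact hfBdd x0 y a ha
  have hEmod : ∀ R η : ℝ, 0 < η → ∃ ρ > 0, ∀ y y' : Euc M, ‖y‖ ≤ R → ‖y'‖ ≤ R →
      ‖y - y'‖ < ρ → ∀ a ∈ A, |E a y - E a y'| ≤ η := by
    intro R η hη
    have hcomp : IsCompact (closedBall (0 : Euc M) R ×ˢ A) := (isCompact_closedBall _ _).prod hA
    have hcont : Continuous (fun z : Euc M × Euc k => ℓ x0 z.1 z.2) :=
      hlCont.comp (by fun_prop : Continuous fun z : Euc M × Euc k =>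
        ((x0, z.1, z.2) : Euc N × Euc M × Euc k))
    have huc := hcomp.uniformContinuousOn_of_continuous hcont.continuousOn
    rw [Metric.uniformContinuousOn_iff] at huc
    obtain ⟨ρ, hρ, h⟩ := huc (η / 2) (by linarith)
    have hP : 0 ≤ ‖p0‖ * L0 := by positivity
    refine ⟨min ρ (η / (2 * (‖p0‖ * L0 + 1))), lt_min hρ (by positivity), ?_⟩
    intro y y' hy hy' hyy a ha
    have h1 := h (y, a) ⟨by simpa using hy, ha⟩ (y', a) ⟨by simpa using hy', ha⟩ (by
      rw [Prod.dist_eq]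
      simp only [dist_self]
      rw [max_eq_left dist_nonneg, dist_eq_norm]
      exact lt_of_lt_of_le hyy (min_le_left _ _))
    rw [Real.dist_eq] at h1
    simp only at h1
    have h2 : |⟪p0, f x0 y a⟫ - ⟪p0, f x0 y' a⟫| ≤ η / 2 := by
      rw [← inner_sub_right]
      have h3 := hfLip x0 x0 y y' a ha
      simp only [sub_self, norm_zero, zero_add] at h3
      have h4 : ‖y - y'‖ ≤ η / (2 * (‖p0‖ * L0 + 1)) := (hyy.trans_le (min_le_right _ _)).le
      calc |⟪p0, f x0 y a - f x0 y' a⟫| ≤ ‖p0‖ * ‖f x0 y a - f x0 y' a‖ := abs_real_inner_le_norm _ _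
        _ ≤ ‖p0‖ * (L0 * ‖y - y'‖) := by gcongr
        _ = (‖p0‖ * L0) * ‖y - y'‖ := by ring
        _ ≤ (‖p0‖ * L0 + 1) * (η / (2 * (‖p0‖ * L0 + 1))) := by gcongr; linarith
        _ = η / 2 := by field_simp
    have e : E a y - E a y' = (⟪p0, f x0 y a⟫ - ⟪p0, f x0 y' a⟫) + (ℓ x0 y a - ℓ x0 y' a) := by
      simp only [hEdef]; ring
    rw [e]
    exact (abs_add_le _ _).trans (by linarith)
  have hEcont : ∀ a ∈ A, Continuous (E a) := by
    intro a ha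
    rw [Metric.continuous_iff]
    intro y ε hε
    obtain ⟨ρ, hρ, h⟩ := hEmod (‖y‖ + 1) (ε / 2) (by linarith)
    refine ⟨min ρ 1, lt_min hρ one_pos, fun z hz => ?_⟩
    rw [dist_eq_norm] at hz
    have h1 : ‖z‖ ≤ ‖y‖ + 1 := by
      have := norm_sub_norm_le z y
      have := hz.trans_le (min_le_right _ _)
      linarith
    have := h z y h1 (by linarith) (hz.trans_le (min_le_left _ _)) a ha
    rw [Real.dist_eq]
    linarith
  have hEcoer : ∀ c : ℝ, ∃ R : ℝ, ∀ y : Euc M, R < ‖y‖ → ∀ a ∈ A, c < E a y := by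
    intro c
    obtain ⟨R, hR⟩ := hlCoer {x0} isCompact_singleton (c + ‖p0‖ * Q0)
    refine ⟨R, fun y hy a ha => ?_⟩
    have h1 := hR y hy x0 rfl a ha
    have h2 := (abs_le.1 (hpf y a ha)).1
    simp only [hEdef]
    linarith
  have hEup : ∀ y, ∃ B, ∀ a ∈ A, E a y ≤ B := by
    intro y
    obtain ⟨B, hB⟩ := hA.bddAbove_image (hlc y).continuousOn
    refine ⟨‖p0‖ * Q0 + B, fun a ha => ?_⟩
    have h1 : ℓ x0 y a ≤ B := hB ⟨a, ha, rfl⟩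
    have h2 := (abs_le.1 (hpf y a ha)).2
    simp only [hEdef]
    linarith
  obtain ⟨B0, hB0⟩ : ∃ B, ∀ y, ∀ a ∈ A, -E a y ≤ B := by
    obtain ⟨R, hR⟩ := hEcoer 0
    have hcont : Continuous (fun z : Euc M × Euc k => ℓ x0 z.1 z.2) :=
      hlCont.comp (by fun_prop : Continuous fun z : Euc M × Euc k =>
        ((x0, z.1, z.2) : Euc N × Euc M × Euc k))
    obtain ⟨B, hB⟩ := ((isCompact_closedBall (0 : Euc M) R).prod hA).bddBelow_image
      hcont.continuousOn
    refine ⟨max 0 (‖p0‖ * Q0 - B), fun y a ha => ?_⟩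
    by_cases hy : ‖y‖ ≤ R
    · refine le_trans ?_ (le_max_right _ _)
      have h1 : B ≤ ℓ x0 y a := hB ⟨(y, a), ⟨by simpa using hy, ha⟩, rfl⟩
      have h2 := (abs_le.1 (hpf y a ha)).1
      simp only [hEdef]
      linarith
    · push Not at hy
      refine le_trans ?_ (le_max_left _ _)
      have := hR y hy a ha
      linarith
  -- either the Hamiltonian is a genuine supremum, or `b < 0`
  have hJ : ∀ y q, b < 0 ∨ BddAbove ((fun a => -⟪q, G a y⟫ - E a y) '' A) := by
    intro y1 q1
    by_contra hcon
    push Not at hcon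
    obtain ⟨hb0, hnb⟩ := hcon
    have hq : ∀ y, ∀ t : ℝ, 0 < t → H y (t • q1) = 0 := by
      intro y t ht
      rw [hH]
      apply Real.sSup_of_not_bddAbove
      rintro ⟨B, hB⟩
      apply hnb
      obtain ⟨B1, hB1⟩ := hEup y
      refine ⟨(B + B1) / t + ‖q1‖ * (L0 * ‖y - y1‖) + B0, ?_⟩
      rintro _ ⟨a, ha, rfl⟩
      have h1 : -⟪t • q1, G a y⟫ - E a y ≤ B := hB ⟨a, ha, rfl⟩
      rw [inner_smul_left] at h1
      simp only [RCLike.conj_to_real] at h1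
      have h2 : -⟪q1, G a y⟫ ≤ (B + B1) / t := by
        rw [le_div_iff₀ ht]
        linarith [hB1 a ha]
      have h3 : ⟪q1, G a y - G a y1⟫ ≤ ‖q1‖ * (L0 * ‖y - y1‖) :=
        (real_inner_le_norm _ _).trans (by gcongr; exact hG a ha y y1)
      rw [inner_sub_right] at h3
      have h4 := hB0 y1 a ha
      simp only
      linarith
    have hq1 : q1 ≠ 0 := by
      rintro rfl
      apply hnb
      refine ⟨B0, ?_⟩
      rintro _ ⟨a, ha, rfl⟩
      simpa using hB0 y1 a ha
    have hq1n : 0 < ‖q1‖ := norm_pos_iff.2 hq1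
    have hsupp : ∀ y, ∀ s : ℝ, 0 < s → suppFn H b y (s • q1) = 0 := by
      intro y s hs
      apply Real.sSup_of_not_bddAbove
      rintro ⟨B, hB⟩
      set t := (|B| + 1) / (s * ‖q1‖ ^ 2) with ht
      have hden : 0 < s * ‖q1‖ ^ 2 := by positivity
      have htpos : 0 < t := by positivity
      have h1 : ⟪t • q1, s • q1⟫ ≤ B := by
        apply hB
        refine ⟨t • q1, ?_, rfl⟩
        show H y (t • q1) ≤ b
        rw [hq y t htpos]
        exact hb0
      rw [inner_smul_left, inner_smul_right, real_inner_self_eq_norm_sq] at h1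
      simp only [RCLike.conj_to_real] at h1
      have h2 : t * (s * ‖q1‖ ^ 2) = |B| + 1 := by rw [ht]; field_simp
      rw [h2] at h1
      linarith [le_abs_self B]
    obtain ⟨R, hR⟩ := hSb {0} isCompact_singleton 0
    set s := (|R| + 1) / ‖q1‖ with hs
    have hspos : 0 < s := by positivity
    have h1 := hR (-(s • q1)) (by
      rw [norm_neg, norm_smul, Real.norm_of_nonneg hspos.le, hs]
      have : (|R| + 1) / ‖q1‖ * ‖q1‖ = |R| + 1 := by field_simp
      rw [this]
      linarith [le_abs_self R]) 0 rfl
    set ξ : ℝ → Euc M := fun τ => (τ - 1) • (s • q1) with hξ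
    have hξd : ∀ τ, deriv ξ τ = s • q1 := by
      intro τ
      have : HasDerivAt ξ ((1 : ℝ) • (s • q1)) τ :=
        ((hasDerivAt_id τ).sub_const 1).smul_const (s • q1)
      rw [this.deriv, one_smul]
    have hmem : (0 : ℝ) ∈ { L : ℝ | ∃ ξ : ℝ → Euc M, IsAdmCurve ξ (-(s • q1)) 0 ∧
        L = intrinsicLen H b ξ } := by
      refine ⟨ξ, ⟨⟨‖s • q1‖₊, ?_⟩, by simp [hξ], by simp [hξ]⟩, ?_⟩
      · apply LipschitzWith.of_dist_le_mul
        intro τ τ'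
        rw [dist_eq_norm, dist_eq_norm]
        have : ξ τ - ξ τ' = (τ - τ') • (s • q1) := by
          simp only [hξ]
          rw [← sub_smul]
          congr 1
          ring
        rw [this, norm_smul, coe_nnnorm, mul_comm]
      · simp only [intrinsicLen]
        have : (fun τ => suppFn H b (ξ τ) (deriv ξ τ)) = fun _ => 0 := by
          funext τ
          rw [hξd, hsupp _ _ hspos]
        simp [this]
    have h2 : intrinsicDist H b (-(s • q1)) 0 ≤ 0 := by
      unfold intrinsicDist
      by_cases hbd : BddBelow { L : ℝ | ∃ ξ : ℝ → Euc M, IsAdmCurve ξ (-(s • q1)) 0 ∧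
        L = intrinsicLen H b ξ }
      · exact csInf_le hbd hmem
      · rw [Real.sInf_of_not_bddBelow hbd]
    linarith
  -- formal inequality at a level `≤ b` gives the control form
  have hpt : ∀ c, c ≤ b → ∀ y q, H y q ≤ c → ∀ a ∈ A, -⟪q, G a y⟫ - E a y ≤ c := by
    intro c hc y q h a ha
    by_cases hbd : BddAbove ((fun a => -⟪q, G a y⟫ - E a y) '' A)
    · rw [hH] at h
      exact (le_csSup hbd ⟨a, ha, rfl⟩).trans h
    · exfalso
      have h0 : H y q = 0 := by rw [hH]; exact Real.sSup_of_not_bddAbove hbd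
      rcases hJ y q with h1 | h1
      · linarith
      · exact hbd h1
  have hTS : ∀ c, c ≤ b → ∀ u, IsVSubOn H c univ u → TS A G E (fun _ => c) u := by
    intro c hc u hu
    refine ⟨upperSemicontinuousOn_univ_iff.1 hu.1, fun ψ hψ y hmax a ha => ?_⟩
    exact hpt c hc _ _ (hu.2 ψ hψ y (mem_univ _) (hmax.on _)) a ha
  have hbc : b = c0 := by
    apply le_antisymm _ hb
    by_contra hlt
    push Not at hlt
    rw [hc0] at hlt
    obtain ⟨c, ⟨u, hu⟩, hcb⟩ := exists_lt_of_csInf_lt hfin hlt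
    have hu' := hTS c hcb.le u hu
    obtain ⟨R, hR⟩ := hEcoer (-c)
    obtain ⟨U, hU⟩ := (hu'.1.upperSemicontinuousOn (closedBall 0 R)).bddAbove_of_isCompact
      (isCompact_closedBall _ _)
    have hu2 : TS A G E (fun _ => c) (fun y => u y + (-U)) := by
      refine ⟨hu'.1.add upperSemicontinuous_const, fun ψ hψ y hmax a ha => ?_⟩
      refine hu'.2 ψ hψ y ?_ a ha
      filter_upwards [hmax] with z hz
      linarith
    have hv := TS_trunc hu2 (by
      intro y a ha hy
      have : ‖y‖ ≤ R := by
        by_contra hy'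
        push Not at hy'
        linarith [hR y hy' a ha]
      have h1 : u y ≤ U := hU ⟨y, by simpa using this, rfl⟩
      linarith)
    have := comparison hAne hL0 hG hEmod hH hv (fun y => (trunc_lt_one _).le) hwsup hwcoer
    linarith
  refine ⟨hbc, ?_⟩
  by_contra hemp
  rw [not_nonempty_iff_eq_empty] at hemp
  have hstrict : ∀ y₀ : Euc M, ∃ (u : Euc M → ℝ) (δ : ℝ) (U : Set (Euc M)),
      IsVSubOn H c0 univ u ∧ 0 < δ ∧ IsOpen U ∧ y₀ ∈ U ∧ IsVSubOn H (c0 - δ) U u := by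
    intro y₀
    by_contra h
    have : y₀ ∈ AubrySet H c0 := h
    rw [hemp] at this
    exact this
  obtain ⟨R, hR⟩ := hEcoer (1 - c0)
  have hcov : ∃ u κ : Euc M → ℝ, UpperSemicontinuous κ ∧ TS A G E κ u ∧ (∀ y, κ y ≤ c0) ∧
      ∃ δ > 0, ∀ y ∈ closedBall (0 : Euc M) R, κ y ≤ c0 - δ := by
    refine (isCompact_closedBall (0 : Euc M) R).induction_on
      (p := fun s => ∃ u κ : Euc M → ℝ, UpperSemicontinuous κ ∧ TS A G E κ u ∧ (∀ y, κ y ≤ c0) ∧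
      ∃ δ > 0, ∀ y ∈ s, κ y ≤ c0 - δ) ?_ ?_ ?_ ?_
    · obtain ⟨u, δ, U, hu, -⟩ := hstrict 0
      exact ⟨u, fun _ => c0, upperSemicontinuous_const, hTS c0 hb u hu, fun _ => le_rfl, 1, one_pos,
        fun y hy => hy.elim⟩
    · rintro s t hst ⟨u, κ, h1, h2, h3, δ, hδ, h4⟩
      exact ⟨u, κ, h1, h2, h3, δ, hδ, fun y hy => h4 y (hst hy)⟩
    · rintro s t ⟨u, κ, h1, h2, h3, δ, hδ, h4⟩ ⟨u', κ', h1', h2', h3', δ', hδ', h4'⟩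
      refine ⟨_, _, ?_, TS_avg hL0 hG hEcont h1 h1' h2 h2', ?_, min δ δ' / 2, ?_, ?_⟩
      · have hhalf : ∀ {v : Euc M → ℝ}, UpperSemicontinuous v →
            UpperSemicontinuous (fun y => 1/2 * v y) := by
          intro v hv
          exact (by fun_prop : Continuous fun t : ℝ => 1/2 * t).comp_upperSemicontinuous hv
            (fun s t hst => by simp only; linarith)
        exact (hhalf h1).add (hhalf h1')
      · intro y
        have := h3 y
        have := h3' y
        linarith
      · have := lt_min hδ hδ'
        linarith
      · rintro y (hy | hy)
        · have := h4 y hy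
          have := h3' y
          have := min_le_left δ δ'
          linarith
        · have := h4' y hy
          have := h3 y
          have := min_le_right δ δ'
          linarith
    · intro y₀ _
      obtain ⟨u, δ, U, hu, hδ, hU, hyU, hus⟩ := hstrict y₀
      refine ⟨U, mem_nhdsWithin_of_mem_nhds (hU.mem_nhds hyU), u,
        fun y => c0 + U.indicator (fun _ => -δ) y, ?_, ?_, ?_, δ, hδ, ?_⟩
      · exact upperSemicontinuous_const.add (hU.upperSemicontinuous_indicator (by linarith))
      · have hu0 := hTS c0 hb u hu
        refine ⟨hu0.1, fun ψ hψ y hmax a ha => ?_⟩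
        by_cases hy : y ∈ U
        · simp only [indicator_of_mem hy]
          have := hpt (c0 - δ) (by linarith) _ _ (hus.2 ψ hψ y hy (hmax.on _)) a ha
          linarith
        · simp only [indicator_of_notMem hy, add_zero]
          exact hu0.2 ψ hψ y hmax a ha
      · intro y
        by_cases hy : y ∈ U
        · simp only [indicator_of_mem hy]
          linarith
        · simp only [indicator_of_notMem hy, add_zero, le_refl]
      · intro y hy
        simp only [indicator_of_mem hy]
        linarith
  obtain ⟨u, κ, -, hu, hκ, δ, hδ, hκK⟩ := hcov
  set X := |B0 - c0 + δ| with hX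
  have hX0 : 0 ≤ X := abs_nonneg _
  set μ := min (1 / 2) (δ / (2 * (X + 1))) with hμ
  have hμ0 : 0 < μ := lt_min (by norm_num) (by positivity)
  have hμ1 : μ ≤ 1 / 2 := min_le_left _ _
  have hμX : μ * (B0 - c0 + δ) ≤ δ / 2 := by
    have h1 : μ ≤ δ / (2 * (X + 1)) := min_le_right _ _
    calc μ * (B0 - c0 + δ) ≤ μ * (X + 1) :=
          mul_le_mul_of_nonneg_left (by linarith [le_abs_self (B0 - c0 + δ)]) hμ0.le
      _ ≤ δ / (2 * (X + 1)) * (X + 1) := by gcongr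
      _ = δ / 2 := by field_simp
  set c1 := c0 - min μ (δ / 2) with hc1
  have hc1lt : c1 < c0 := by
    have : 0 < min μ (δ / 2) := lt_min hμ0 (by linarith)
    linarith
  have hmem : c1 ∈ subsolLevels H := by
    refine ⟨fun y => (1 - μ) * u y, ?_, ?_⟩
    · rw [upperSemicontinuousOn_univ_iff]
      exact (by fun_prop : Continuous fun t : ℝ => (1 - μ) * t).comp_upperSemicontinuous hu.1
        (fun s t hst => by
          simp only
          exact mul_le_mul_of_nonneg_left hst (by linarith))
    · intro ψ hψ y _ hmax
      rw [hH]
      apply csSup_le (hAne.image _)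
      rintro _ ⟨a, ha, rfl⟩
      have hμ' : 0 < 1 - μ := by linarith
      have t := hu.2 (fun z => (1 - μ)⁻¹ * ψ z + 0 * ‖z - 0‖ ^ 2 + 0 * ‖z - 0‖ ^ 2)
        (test_contDiff ψ hψ _ _ _ _ _) y (by
          rw [isLocalMaxOn_univ_iff] at hmax
          filter_upwards [hmax] with z hz
          have h1 : (1 - μ)⁻¹ * ((1 - μ) * u z - ψ z) ≤ (1 - μ)⁻¹ * ((1 - μ) * u y - ψ y) :=
            mul_le_mul_of_nonneg_left hz (by positivity)
          have e : ∀ s t : ℝ, (1 - μ)⁻¹ * ((1 - μ) * s - t) = s - (1 - μ)⁻¹ * t := by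
            intro s t; field_simp
          rw [e, e] at h1
          linarith) a ha
      rw [test_gradient ψ hψ] at t
      simp only [mul_zero, zero_smul, add_zero, inner_smul_left, RCLike.conj_to_real] at t
      have t2 := mul_le_mul_of_nonneg_left t hμ'.le
      have e : (1 - μ) * (-((1 - μ)⁻¹ * ⟪gradient ψ y, G a y⟫) - E a y) =
          -⟪gradient ψ y, G a y⟫ - (1 - μ) * E a y := by field_simp
      rw [e] at t2
      simp only
      by_cases hy : ‖y‖ ≤ R
      · have h1 := hκK y (by simpa using hy)
        have h2 := mul_le_mul_of_nonneg_left h1 hμ'.le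
        have h3 := mul_le_mul_of_nonneg_left (hB0 y a ha) hμ0.le
        have h4 := min_le_right μ (δ / 2)
        linarith
      · push Not at hy
        have h1 := hR y hy a ha
        have h2 := mul_le_mul_of_nonneg_left (hκ y) hμ'.le
        have h3 := mul_le_mul_of_nonneg_left h1.le hμ0.le
        have h4 := min_le_left μ (δ / 2)
        linarith
  have := csInf_le hbdd hmem
  rw [← hc0] at this
  linarith
end
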